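/- Let Γ be the ideal of graded *-identities of a finitely generated G-graded PI-algebra A with graded involution over a field F of characteristic zero, where G is a finite abelian group. Then Γ contains the ideal of graded *-identities of some finite dimensional G-graded algebra with involution, namely of B ⊗_F F[G] where B is a finite dimensional algebra with involution satisfying the same (non-graded) *-identities as A. -/

import Mathlib

/-- Variables of the free graded `*`-algebra: `inl (i, θ)` is the symmetric variable
`y_{iθ}`, `inr (i, θ)` is the skew-symmetric variable `z_{iθ}`, of `G`-degree `θ`. -/
def GIVar (G : Type) : Type := (ℕ × G) ⊕ (ℕ × G)

/-- A `G`-graded associative `F`-algebra with a graded involution. -/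
structure GrStarAlgebra (F G : Type) [Field F] [AddCommGroup G] [DecidableEq G] where
  carrier : Type
  [ringInst : Ring carrier]
  [algInst : Algebra F carrier]
  gr : G → Submodule F carrier
  s : carrier →ₗ[F] carrier
  internal : DirectSum.IsInternal gr
  gmul : ∀ θ₁ θ₂ : G, ∀ x ∈ gr θ₁, ∀ y ∈ gr θ₂, x * y ∈ gr (θ₁ + θ₂)
  anti : ∀ x y : carrier, s (x * y) = s y * s x
  sinv : ∀ x : carrier, s (s x) = x
  sgraded : ∀ θ : G, ∀ x ∈ gr θ, s x ∈ gr θ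

attribute [instance] GrStarAlgebra.ringInst GrStarAlgebra.algInst

/-- The set of graded `*`-identities of a graded `*`-algebra `A`: the elements of the
free algebra `F⟨Y,Z⟩` vanishing under every admissible graded evaluation, i.e. every
algebra map sending each `y_{iθ}` to a symmetric element of degree `θ` and each
`z_{iθ}` to a skew-symmetric element of degree `θ`. -/
def giIdeal (F G : Type) [Field F] [AddCommGroup G] [DecidableEq G] (A : GrStarAlgebra F G) :
    Set (FreeAlgebra F (GIVar G)) :=
  {f | ∀ φ : FreeAlgebra F (GIVar G) →ₐ[F] A.carrier,
    (∀ v : ℕ × G, φ (FreeAlgebra.ι F (Sum.inl v)) ∈ A.gr v.2 ∧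
      A.s (φ (FreeAlgebra.ι F (Sum.inl v))) = φ (FreeAlgebra.ι F (Sum.inl v))) →
    (∀ v : ℕ × G, φ (FreeAlgebra.ι F (Sum.inr v)) ∈ A.gr v.2 ∧
      A.s (φ (FreeAlgebra.ι F (Sum.inr v))) = - φ (FreeAlgebra.ι F (Sum.inr v))) →
    φ f = 0}

/-- `f` is an identity of the algebra of `ι × ι` matrices over `K`. -/
def IsMatrixIdentity (ι K : Type) [Fintype ι] [DecidableEq ι] {F : Type} [Field F] [CommRing K]
    [Algebra F K] {X : Type} (f : FreeAlgebra F X) : Prop :=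
  ∀ ψ : FreeAlgebra F X →ₐ[F] Matrix ι ι K, ψ f = 0

/-- `A` satisfies all identities of the algebra of `N × N` matrices over `F`. -/
def SatisfiesMatrixIdentities (F A : Type) [Field F] [Ring A] [Algebra F A] (N : ℕ) : Prop :=
  ∀ (X : Type) (f : FreeAlgebra F X), IsMatrixIdentity (Fin N) F f →
    ∀ φ : FreeAlgebra F X →ₐ[F] A, φ f = 0

section MatrixIdentities

variable {F : Type} [Field F] {X : Type} {f : FreeAlgebra F X}

lemma IsMatrixIdentity.reindex {ι κ K : Type} [Fintype ι] [DecidableEq ι] [Fintype κ]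
    [DecidableEq κ] [CommRing K] [Algebra F K] (e : ι ≃ κ)
    (hf : IsMatrixIdentity ι K f) : IsMatrixIdentity κ K f := by
  intro ψ
  have h := hf ((Matrix.reindexAlgEquiv F K e.symm).toAlgHom.comp ψ)
  ext i j
  have h' := congrFun (congrFun h (e.symm i)) (e.symm j)
  simpa using h'

/-- Over an infinite field, matrix identities persist under commutative extensions. -/
lemma IsMatrixIdentity.extend [Infinite F] {ι K : Type} [Fintype ι] [DecidableEq ι] [CommRing K]
    [Algebra F K] (hf : IsMatrixIdentity ι F f) : IsMatrixIdentity ι K f := by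
  intro ψ
  let gen : FreeAlgebra F X →ₐ[F] Matrix ι ι (MvPolynomial (X × ι × ι) F) :=
    FreeAlgebra.lift F fun x => Matrix.of fun i j => MvPolynomial.X (x, i, j)
  have hgen : gen f = 0 := by
    ext1 i j
    refine MvPolynomial.funext fun v => ?_
    have h := hf ((MvPolynomial.aeval v).mapMatrix.comp gen)
    have h' := congrFun (congrFun h i) j
    simpa [MvPolynomial.aeval_eq_eval] using h'
  have hψ : ψ = (MvPolynomial.aeval fun p : X × ι × ι =>
      ψ (FreeAlgebra.ι F p.1) p.2.1 p.2.2).mapMatrix.comp gen := by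
    ext x i j
    simp [gen]
  rw [hψ, AlgHom.comp_apply, hgen, map_zero]

end MatrixIdentities

set_option linter.unusedSectionVars false
section Reduction

variable {F G : Type} [Field F] [AddCommGroup G] [DecidableEq G] {N : ℕ}

/-- Matrices paired with their opposite, where the opposite is realised by transposition. -/
abbrev DoubleMatrix (F : Type) (N : ℕ) : Type :=
  Matrix (Fin N) (Fin N) F × Matrix (Fin N) (Fin N) F

/-- The exchange involution. -/
def exchange (F : Type) [Field F] (N : ℕ) : DoubleMatrix F N →ₗ[F] DoubleMatrix F N where
  toFun p := (p.2.transpose, p.1.transpose)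
  map_add' := by intros; simp
  map_smul' := by intros; simp

lemma exchange_apply (p : DoubleMatrix F N) :
    exchange F N p = (p.2.transpose, p.1.transpose) := rfl

open AddMonoidAlgebra

/-- The homogeneous components of a group algebra. -/
def groupAlgebraGrading (F G B : Type) [Field F] [Ring B] [Algebra F B] (θ : G) :
    Submodule F (AddMonoidAlgebra B G) where
  carrier := {x | ∀ g, g ≠ θ → x.coeff g = 0}
  add_mem' := by
    intro a b ha hb g hg
    simp [ha g hg, hb g hg]
  zero_mem' := by intro g _; simp
  smul_mem' := by
    intro c x hx g hg
    simp [hx g hg]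

lemma single_mem_groupAlgebraGrading {B : Type} [Ring B] [Algebra F B] (θ : G) (b : B) :
    single θ b ∈ groupAlgebraGrading F G B θ := by
  intro g hg
  simp [hg.symm]

lemma eq_single_of_mem_groupAlgebraGrading {B : Type} [Ring B] [Algebra F B] {θ : G}
    {x : AddMonoidAlgebra B G} (hx : x ∈ groupAlgebraGrading F G B θ) :
    x = single θ (x.coeff θ) := by
  ext g
  by_cases hg : g = θ
  · subst hg; simp
  · simp [hx g hg, Ne.symm hg]

lemma groupAlgebraGrading_internal (B : Type) [Ring B] [Algebra F B] :
    DirectSum.IsInternal (groupAlgebraGrading F G B) := by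
  have key : ∀ (x : DirectSum G fun θ => groupAlgebraGrading F G B θ) (g : G),
      (DirectSum.coeAddMonoidHom (groupAlgebraGrading F G B) x).coeff g
        = (x g : AddMonoidAlgebra B G).coeff g := by
    intro x g
    induction x using DirectSum.induction_on with
    | zero => simp
    | of i y =>
      rw [DirectSum.coeAddMonoidHom_of]
      by_cases hg : g = i
      · subst hg; simp
      · rw [DirectSum.of_eq_of_ne _ _ _ hg]
        simpa using y.2 g hg
    | add x y hx hy => simp [hx, hy]
  constructor
  · rw [injective_iff_map_eq_zero]
    intro x hx
    ext g : 2
    rw [eq_single_of_mem_groupAlgebraGrading (x g).2, ← key, hx]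
    simp
  · intro y
    induction y using AddMonoidAlgebra.induction_linear with
    | zero => exact ⟨0, map_zero _⟩
    | add a b ha hb =>
      obtain ⟨a', rfl⟩ := ha
      obtain ⟨b', rfl⟩ := hb
      exact ⟨a' + b', map_add _ _ _⟩
    | single θ b =>
      exact ⟨DirectSum.of (fun θ => groupAlgebraGrading F G B θ) θ
        ⟨single θ b, single_mem_groupAlgebraGrading θ b⟩, by simp⟩

/-- The exchange involution applied to coefficients. -/
noncomputable def groupAlgebraExchange (F G : Type) [Field F] (N : ℕ) :
    AddMonoidAlgebra (DoubleMatrix F N) G →ₗ[F] AddMonoidAlgebra (DoubleMatrix F N) G where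
  toFun x := .ofCoeff (x.coeff.mapRange (exchange F N) (map_zero _))
  map_add' := by intros; ext : 2; simp
  map_smul' := by intros; ext : 2; simp

lemma groupAlgebraExchange_single (θ : G) (b : DoubleMatrix F N) :
    groupAlgebraExchange F G N (single θ b) = single θ (exchange F N b) := by
  ext : 1
  simp [groupAlgebraExchange]

/-- The group algebra with coefficients in `DoubleMatrix F N`, as a graded algebra with
involution. -/
noncomputable def doubleMatrixGroupAlgebra (F G : Type) [Field F] [AddCommGroup G]
    [DecidableEq G] (N : ℕ) :
    GrStarAlgebra F G where
  carrier := AddMonoidAlgebra (DoubleMatrix F N) G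
  gr := groupAlgebraGrading F G (DoubleMatrix F N)
  s := groupAlgebraExchange F G N
  internal := groupAlgebraGrading_internal _
  gmul := by
    intro θ₁ θ₂ x hx y hy
    rw [eq_single_of_mem_groupAlgebraGrading hx, eq_single_of_mem_groupAlgebraGrading hy,
      single_mul_single]
    exact single_mem_groupAlgebraGrading _ _
  anti := by
    intro x y
    induction x using AddMonoidAlgebra.induction_linear with
    | zero => simp
    | add a b ha hb => simp only [add_mul, mul_add, map_add, ha, hb]
    | single θ b =>
      induction y using AddMonoidAlgebra.induction_linear with
      | zero => simp
      | add a b ha hb => simp only [add_mul, mul_add, map_add, ha, hb]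
      | single θ' b' =>
        simp only [single_mul_single, groupAlgebraExchange_single, add_comm θ θ']
        simp [exchange_apply]
  sinv := by
    intro x
    induction x using AddMonoidAlgebra.induction_linear with
    | zero => simp
    | add a b ha hb => simp only [map_add, ha, hb]
    | single θ b => simp [groupAlgebraExchange_single, exchange_apply]
  sgraded := by
    intro θ x hx
    rw [eq_single_of_mem_groupAlgebraGrading hx, groupAlgebraExchange_single]
    exact single_mem_groupAlgebraGrading _ _

/-- The degree of a variable. -/
def GIVar.degree (v : GIVar G) : G := Sum.elim Prod.snd Prod.snd v

/-- The sign of a variable under the involution. -/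
def GIVar.sign (F : Type) [Field F] (v : GIVar G) : F := Sum.elim (fun _ => 1) (fun _ => -1) v

lemma GIVar.sign_mul_self (v : GIVar G) : v.sign F * v.sign F = 1 := by
  unfold GIVar.sign
  cases v <;> simp

/-- The decomposition of free algebra elements into homogeneous components. -/
noncomputable def gradedComponents (F G : Type) [Field F] [AddCommGroup G] :
    FreeAlgebra F (GIVar G) →ₐ[F] AddMonoidAlgebra (FreeAlgebra F (GIVar G)) G :=
  FreeAlgebra.lift F fun v => single v.degree (FreeAlgebra.ι F v)

lemma sum_gradedComponents [Fintype G] (f : FreeAlgebra F (GIVar G)) :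
    ∑ θ, (gradedComponents F G f).coeff θ = f := by
  let aug : AddMonoidAlgebra (FreeAlgebra F (GIVar G)) G →ₐ[F] FreeAlgebra F (GIVar G) :=
    AddMonoidAlgebra.liftNCAlgHom (AlgHom.id F _) (1 : Multiplicative G →* _)
      fun x y => by simp
  have haug : ∀ x, aug x = ∑ θ, x.coeff θ := by
    intro x
    induction x using AddMonoidAlgebra.induction_linear with
    | zero => simp
    | add a b ha hb => simp [ha, hb, Finset.sum_add_distrib]
    | single θ b => simp [aug, Finsupp.single_apply, AddMonoidAlgebra.liftNCAlgHom]
  have hid : aug.comp (gradedComponents F G) = AlgHom.id F _ := by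
    ext v
    simp [gradedComponents, haug, Finsupp.single_apply]
  rw [← haug]
  exact DFunLike.congr_fun hid f

lemma gradedComponents_coeff_isMatrixIdentity {f : FreeAlgebra F (GIVar G)}
    (hf : f ∈ giIdeal F G (doubleMatrixGroupAlgebra F G N)) (θ : G) :
    IsMatrixIdentity (Fin N) F ((gradedComponents F G f).coeff θ) := by
  intro ψ
  let ev : FreeAlgebra F (GIVar G) →ₐ[F] AddMonoidAlgebra (DoubleMatrix F N) G :=
    FreeAlgebra.lift F fun v => single v.degree
      (ψ (FreeAlgebra.ι F v), v.sign F • (ψ (FreeAlgebra.ι F v)).transpose)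
  have hι : ∀ v, ev (FreeAlgebra.ι F v) = single v.degree
      (ψ (FreeAlgebra.ι F v), v.sign F • (ψ (FreeAlgebra.ι F v)).transpose) :=
    fun v => FreeAlgebra.lift_ι_apply _ _
  have hmem : ∀ v, ev (FreeAlgebra.ι F v) ∈ groupAlgebraGrading F G (DoubleMatrix F N) v.degree :=
    fun v => by rw [hι]; exact single_mem_groupAlgebraGrading _ _
  have hswap : ∀ v, groupAlgebraExchange F G N (ev (FreeAlgebra.ι F v)) =
      v.sign F • ev (FreeAlgebra.ι F v) := fun v => by
    rw [hι, groupAlgebraExchange_single, smul_single]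
    simp [exchange_apply, smul_smul, GIVar.sign_mul_self]
  have hev : ev f = 0 :=
    hf ev (fun v => ⟨hmem (Sum.inl v), (hswap (Sum.inl v)).trans (one_smul F _)⟩)
      (fun v => ⟨hmem (Sum.inr v), (hswap (Sum.inr v)).trans (neg_one_smul F _)⟩)
  let p : DoubleMatrix F N →+* Matrix (Fin N) (Fin N) F := RingHom.fst _ _
  have hcomp : ∀ g, mapRingHom G p (ev g)
      = mapRingHom G (ψ : FreeAlgebra F (GIVar G) →+* _) (gradedComponents F G g) := by
    intro g
    induction g using FreeAlgebra.induction with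
    | grade0 r =>
      simp only [AlgHom.commutes]
      simp [p]
    | grade1 v => simp [ev, gradedComponents, p, mapRingHom_single]
    | mul a b ha hb => simp only [map_mul, ha, hb]
    | add a b ha hb => simp only [map_add, ha, hb]
  have h := hcomp f
  rw [hev, map_zero] at h
  have h' := congrArg (fun x => x.coeff θ) h
  simpa using h'.symm

instance doubleMatrixGroupAlgebra_finite [Finite G] :
    FiniteDimensional F (doubleMatrixGroupAlgebra F G N).carrier := by
  change FiniteDimensional F (AddMonoidAlgebra (DoubleMatrix F N) G)
  exact Module.Finite.equiv (AddMonoidAlgebra.coeffLinearEquiv (S := DoubleMatrix F N) F).symm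

theorem exists_giIdeal_subset [Fintype G] (A : GrStarAlgebra F G)
    (hA : SatisfiesMatrixIdentities F A.carrier N) :
    ∃ C : GrStarAlgebra F G, FiniteDimensional F C.carrier ∧ giIdeal F G C ⊆ giIdeal F G A := by
  refine ⟨doubleMatrixGroupAlgebra F G N, inferInstance, fun f hf φ _ _ => ?_⟩
  rw [← sum_gradedComponents f, map_sum]
  exact Finset.sum_eq_zero fun θ _ =>
    hA _ _ (gradedComponents_coeff_isMatrixIdentity hf θ) φ

end Reduction


section TensorSeparation

open scoped TensorProduct

variable {F V W : Type} [Field F] [AddCommGroup V] [Module F V] [AddCommGroup W] [Module F W]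

lemma TensorProduct.rTensor_eq_zero_of_separating {Λ : Set (V →ₗ[F] F)} {p : V →ₗ[F] V}
    (hp : ∀ u, (∀ l ∈ Λ, l u = 0) → p u = 0) {t : V ⊗[F] W}
    (ht : ∀ l ∈ Λ, TensorProduct.map l LinearMap.id t = 0) :
    TensorProduct.map p LinearMap.id t = 0 := by
  let b := Module.Basis.ofVectorSpace F W
  obtain ⟨c, rfl⟩ := TensorProduct.eq_repr_basis_right b t
  have hc : ∀ i, p (c i) = 0 := by
    refine fun i => hp _ fun l hl => ?_
    have h := congrArg (TensorProduct.lid F W) (ht l hl)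
    have h2 : (Finsupp.linearCombination F b) (c.mapRange l (map_zero l)) = 0 := by
      rw [Finsupp.linearCombination_apply, Finsupp.sum_mapRange_index (by simp)]
      simpa [Finsupp.sum, map_sum] using h
    have h3 := (linearIndependent_iff.mp b.linearIndependent) _ h2
    simpa using DFunLike.congr_fun h3 i
  simp [Finsupp.sum, map_sum, hc]

lemma TensorProduct.map_eq_zero_of_separating {Λ : Set (V →ₗ[F] F)} {Λ' : Set (W →ₗ[F] F)}
    {p : V →ₗ[F] V} {q : W →ₗ[F] W} (hp : ∀ u, (∀ l ∈ Λ, l u = 0) → p u = 0)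
    (hq : ∀ u, (∀ l ∈ Λ', l u = 0) → q u = 0) {t : V ⊗[F] W}
    (ht : ∀ l ∈ Λ, ∀ l' ∈ Λ', TensorProduct.map l l' t = 0) :
    TensorProduct.map p q t = 0 := by
  have hpq : TensorProduct.map p q t
      = TensorProduct.map p LinearMap.id (TensorProduct.map LinearMap.id q t) := by
    rw [← LinearMap.comp_apply, ← TensorProduct.map_comp, LinearMap.comp_id, LinearMap.id_comp]
  rw [hpq]
  refine rTensor_eq_zero_of_separating hp fun l hl => ?_
  have h1 : q (TensorProduct.lid F W (TensorProduct.map l LinearMap.id t)) = 0 := by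
    refine hq _ fun l' hl' => ?_
    have h := congrArg (TensorProduct.lid F F) (ht l hl l' hl')
    rw [map_zero] at h
    rw [← h]
    clear h ht hpq
    induction t using TensorProduct.induction_on with
    | zero => simp
    | tmul x y => simp
    | add x y hx hy => simp only [map_add, hx, hy]
  apply (TensorProduct.lid F W).injective
  rw [map_zero, ← h1]
  clear h1 ht hpq
  induction t using TensorProduct.induction_on with
  | zero => simp
  | tmul x y => simp
  | add x y hx hy => simp only [map_add, hx, hy]

lemma Submodule.exists_projection (I : Submodule F V) :
    ∃ e : V →ₗ[F] V, (∀ u, e u ∈ I) ∧ ∀ u ∈ I, e u = u := by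
  obtain ⟨g, hg⟩ := LinearMap.exists_leftInverse_of_injective I.subtype I.ker_subtype
  refine ⟨I.subtype ∘ₗ g, fun u => (g u).2, fun u hu => ?_⟩
  have := DFunLike.congr_fun hg ⟨u, hu⟩
  simpa using congrArg Subtype.val this

end TensorSeparation

section Lewin

open scoped TensorProduct

variable {F : Type} [Field F] {X : Type}

/-- The identities of `ι × ι` matrices. -/
def matrixIdentities (F X ι : Type) [Field F] [Fintype ι] [DecidableEq ι] :
    Submodule F (FreeAlgebra F X) where
  carrier := {f | IsMatrixIdentity ι F f}
  add_mem' := by intro a b ha hb ψ; simp [ha ψ, hb ψ]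
  zero_mem' := by intro ψ; simp
  smul_mem' := by intro c a ha ψ; simp [ha ψ]

/-- The derivation `FreeAlgebra F X → R` along two algebra maps, with given values on
variables. -/
def freeDerivationHom {R : Type} [Ring R] [Algebra F R] (α β : FreeAlgebra F X →ₐ[F] R)
    (d : X → R) : FreeAlgebra F X →ₐ[F] Matrix (Fin 2) (Fin 2) R :=
  FreeAlgebra.lift F fun x =>
    !![α (FreeAlgebra.ι F x), d x; 0, β (FreeAlgebra.ι F x)]

lemma freeDerivationHom_eq {R : Type} [Ring R] [Algebra F R] (α β : FreeAlgebra F X →ₐ[F] R)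
    (d : X → R) (f : FreeAlgebra F X) :
    freeDerivationHom α β d f = !![α f, freeDerivationHom α β d f 0 1; 0, β f] := by
  induction f using FreeAlgebra.induction with
  | grade0 r =>
    ext i j
    fin_cases i <;> fin_cases j <;> simp [Matrix.algebraMap_matrix_apply]
  | grade1 x => simp [freeDerivationHom]
  | mul a b ha hb =>
    rw [map_mul, ha, hb]
    simp
  | add a b ha hb =>
    rw [map_add, ha, hb]
    simp

/-- The free partial derivative in the direction of the variable `x`. -/
noncomputable def freePartial (F : Type) [Field F] {X : Type} [DecidableEq X] (x : X) :
    FreeAlgebra F X →ₗ[F] FreeAlgebra F X ⊗[F] FreeAlgebra F X :=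
  LinearMap.comp (Matrix.entryLinearMap F (FreeAlgebra F X ⊗[F] FreeAlgebra F X) 0 1)
    (freeDerivationHom Algebra.TensorProduct.includeLeft Algebra.TensorProduct.includeRight
      (Pi.single x 1)).toLinearMap

variable [DecidableEq X]

lemma freePartial_algebraMap (x : X) (r : F) : freePartial F x (algebraMap F _ r) = 0 := by
  simp [freePartial, Matrix.algebraMap_matrix_apply]

lemma freePartial_ι (x y : X) :
    freePartial F x (FreeAlgebra.ι F y) = (Pi.single x 1 : X → _) y := by
  simp [freePartial, freeDerivationHom]

lemma freePartial_mul (x : X) (f g : FreeAlgebra F X) : freePartial F x (f * g) =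
    (f ⊗ₜ 1) * freePartial F x g + freePartial F x f * (1 ⊗ₜ g) := by
  simp only [freePartial, LinearMap.comp_apply, AlgHom.toLinearMap_apply, map_mul]
  rw [freeDerivationHom_eq _ _ _ f, freeDerivationHom_eq _ _ _ g]
  simp [Matrix.entryLinearMap_apply]

/-- The map `u ⊗ v ↦ u x ⊗ v - u ⊗ x v`. -/
noncomputable def tensorCommutator (F : Type) [Field F] {X : Type} (x : X) :
    FreeAlgebra F X ⊗[F] FreeAlgebra F X →ₗ[F] FreeAlgebra F X ⊗[F] FreeAlgebra F X :=
  TensorProduct.map (LinearMap.mulRight F (FreeAlgebra.ι F x)) LinearMap.id -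
    TensorProduct.map LinearMap.id (LinearMap.mulLeft F (FreeAlgebra.ι F x))

lemma tensorCommutator_tmul (x : X) (u v : FreeAlgebra F X) :
    tensorCommutator F x (u ⊗ₜ v) =
      (u * FreeAlgebra.ι F x) ⊗ₜ v - u ⊗ₜ (FreeAlgebra.ι F x * v) := by
  simp [tensorCommutator]

lemma tensorCommutator_mul_left (x : X) (f : FreeAlgebra F X)
    (t : FreeAlgebra F X ⊗[F] FreeAlgebra F X) :
    tensorCommutator F x ((f ⊗ₜ 1) * t) = (f ⊗ₜ 1) * tensorCommutator F x t := by
  induction t using TensorProduct.induction_on with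
  | zero => simp
  | tmul u v => simp [tensorCommutator_tmul, mul_sub, mul_assoc]
  | add a b ha hb => simp only [mul_add, map_add, ha, hb]

lemma tensorCommutator_mul_right (x : X) (f : FreeAlgebra F X)
    (t : FreeAlgebra F X ⊗[F] FreeAlgebra F X) :
    tensorCommutator F x (t * (1 ⊗ₜ f)) = tensorCommutator F x t * (1 ⊗ₜ f) := by
  induction t using TensorProduct.induction_on with
  | zero => simp
  | tmul u v => simp [tensorCommutator_tmul, sub_mul, mul_assoc]
  | add a b ha hb => simp only [add_mul, map_add, ha, hb]

lemma exists_sum_tensorCommutator (f : FreeAlgebra F X) : ∃ s : Finset X, ∀ t : Finset X, s ⊆ t →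
    f ⊗ₜ[F] (1 : FreeAlgebra F X) - (1 : FreeAlgebra F X) ⊗ₜ[F] f =
      ∑ x ∈ t, tensorCommutator F x (freePartial F x f) := by
  induction f using FreeAlgebra.induction with
  | grade0 r =>
    refine ⟨∅, fun t _ => ?_⟩
    simp only [freePartial_algebraMap, map_zero, Finset.sum_const_zero]
    simp [Algebra.algebraMap_eq_smul_one, TensorProduct.smul_tmul]
  | grade1 y =>
    refine ⟨{y}, fun t ht => ?_⟩
    rw [Finset.sum_eq_single_of_mem y (ht (by simp))]
    · simp [freePartial_ι, Algebra.TensorProduct.one_def, tensorCommutator_tmul]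
    · intro x _ hx
      simp [freePartial_ι, hx.symm]
  | mul a b ha hb =>
    obtain ⟨s, hs⟩ := ha
    obtain ⟨s', hs'⟩ := hb
    refine ⟨s ∪ s', fun t ht => ?_⟩
    simp only [freePartial_mul, map_add, tensorCommutator_mul_left, tensorCommutator_mul_right,
      Finset.sum_add_distrib, ← Finset.mul_sum, ← Finset.sum_mul]
    rw [← hs t (Finset.union_subset_left ht), ← hs' t (Finset.union_subset_right ht)]
    simp [mul_sub, sub_mul]
  | add a b ha hb =>
    obtain ⟨s, hs⟩ := ha
    obtain ⟨s', hs'⟩ := hb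
    refine ⟨s ∪ s', fun t ht => ?_⟩
    simp only [map_add, Finset.sum_add_distrib]
    rw [← hs t (Finset.union_subset_left ht), ← hs' t (Finset.union_subset_right ht)]
    simp [TensorProduct.add_tmul, TensorProduct.tmul_add]
    abel

variable {ι κ : Type} [Fintype ι] [DecidableEq ι] [Fintype κ] [DecidableEq κ]

/-- The map `u ⊗ v ↦ φ u * E * ψ v`. -/
noncomputable def sandwich (φ : FreeAlgebra F X →ₐ[F] Matrix ι ι F)
    (ψ : FreeAlgebra F X →ₐ[F] Matrix κ κ F) (E : Matrix ι κ F) :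
    FreeAlgebra F X ⊗[F] FreeAlgebra F X →ₗ[F] Matrix ι κ F :=
  TensorProduct.lift (LinearMap.mk₂ F (fun u v => φ u * E * ψ v)
    (by intros; simp [Matrix.add_mul]) (by intros; simp)
    (by intros; simp [Matrix.mul_add]) (by intros; simp))

lemma blockHom_eq (φ : FreeAlgebra F X →ₐ[F] Matrix ι ι F)
    (ψ : FreeAlgebra F X →ₐ[F] Matrix κ κ F) (E : Matrix ι κ F) (x : X) (f : FreeAlgebra F X) :
    FreeAlgebra.lift F (fun y => Matrix.fromBlocks (φ (FreeAlgebra.ι F y))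
      (if y = x then E else 0) 0 (ψ (FreeAlgebra.ι F y))) f =
      Matrix.fromBlocks (φ f) (sandwich φ ψ E (freePartial F x f)) 0 (ψ f) := by
  have hl : ∀ (f : FreeAlgebra F X) t, sandwich φ ψ E ((f ⊗ₜ 1) * t) = φ f * sandwich φ ψ E t := by
    intro f t
    induction t using TensorProduct.induction_on with
    | zero => simp
    | tmul u v => simp [sandwich, Matrix.mul_assoc]
    | add a b ha hb => simp only [mul_add, map_add, ha, hb, Matrix.mul_add]
  have hr : ∀ (f : FreeAlgebra F X) t, sandwich φ ψ E (t * (1 ⊗ₜ f)) = sandwich φ ψ E t * ψ f := by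
    intro f t
    induction t using TensorProduct.induction_on with
    | zero => simp
    | tmul u v => simp [sandwich, Matrix.mul_assoc]
    | add a b ha hb => simp only [add_mul, map_add, ha, hb, Matrix.add_mul]
  induction f using FreeAlgebra.induction with
  | grade0 r =>
    rw [freePartial_algebraMap, map_zero]
    ext (i | i) (j | j) <;> simp [Matrix.algebraMap_matrix_apply]
  | grade1 y =>
    simp only [FreeAlgebra.lift_ι_apply, freePartial_ι]
    by_cases h : y = x
    · subst h
      simp [sandwich, Algebra.TensorProduct.one_def]
    · simp [h]
  | mul a b ha hb =>
    rw [map_mul, ha, hb, freePartial_mul]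
    simp [Matrix.fromBlocks_multiply, hl, hr]
  | add a b ha hb =>
    rw [map_add, ha, hb]
    simp [Matrix.fromBlocks_add]

lemma diagonalHom_eq (φ : FreeAlgebra F X →ₐ[F] Matrix ι ι F)
    (ψ : FreeAlgebra F X →ₐ[F] Matrix κ κ F) (f : FreeAlgebra F X) :
    FreeAlgebra.lift F (fun y => Matrix.fromBlocks (φ (FreeAlgebra.ι F y)) 0 0
      (ψ (FreeAlgebra.ι F y))) f = Matrix.fromBlocks (φ f) 0 0 (ψ f) := by
  induction f using FreeAlgebra.induction with
  | grade0 r => ext (i | i) (j | j) <;> simp [Matrix.algebraMap_matrix_apply]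
  | grade1 y => simp
  | mul a b ha hb => rw [map_mul, ha, hb]; simp [Matrix.fromBlocks_multiply]
  | add a b ha hb => rw [map_add, ha, hb]; simp [Matrix.fromBlocks_add]

lemma IsMatrixIdentity.diagonal {f : FreeAlgebra F X} (hf : IsMatrixIdentity (ι ⊕ κ) F f)
    (φ : FreeAlgebra F X →ₐ[F] Matrix ι ι F) (ψ : FreeAlgebra F X →ₐ[F] Matrix κ κ F) :
    φ f = 0 ∧ ψ f = 0 := by
  have h := diagonalHom_eq φ ψ f
  rw [hf] at h
  have h := Matrix.fromBlocks_inj.mp (h.symm.trans Matrix.fromBlocks_zero.symm)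
  exact ⟨h.1, h.2.2.2⟩

lemma IsMatrixIdentity.sandwich_freePartial {f : FreeAlgebra F X}
    (hf : IsMatrixIdentity (ι ⊕ κ) F f)
    (φ : FreeAlgebra F X →ₐ[F] Matrix ι ι F) (ψ : FreeAlgebra F X →ₐ[F] Matrix κ κ F)
    (E : Matrix ι κ F) (x : X) : sandwich φ ψ E (freePartial F x f) = 0 := by
  have h := blockHom_eq φ ψ E x f
  rw [hf] at h
  exact (Matrix.fromBlocks_inj.mp (h.symm.trans Matrix.fromBlocks_zero.symm)).2.1

/-- The matrix entry functionals on the free algebra. -/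
def matrixEntries (F X ι : Type) [Field F] [Fintype ι] [DecidableEq ι] :
    Set (FreeAlgebra F X →ₗ[F] F) :=
  {l | ∃ (φ : FreeAlgebra F X →ₐ[F] Matrix ι ι F) (i j : ι), ∀ f, l f = φ f i j}

lemma mem_matrixIdentities_of_entries {f : FreeAlgebra F X}
    (hf : ∀ l ∈ matrixEntries F X ι, l f = 0) : f ∈ matrixIdentities F X ι := by
  intro φ
  ext i j
  exact hf (Matrix.entryLinearMap F F i j ∘ₗ φ.toLinearMap) ⟨φ, i, j, fun _ => rfl⟩

lemma IsMatrixIdentity.map_entries {f : FreeAlgebra F X} (hf : IsMatrixIdentity (ι ⊕ κ) F f)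
    {l l' : FreeAlgebra F X →ₗ[F] F} (hl : l ∈ matrixEntries F X ι)
    (hl' : l' ∈ matrixEntries F X κ) (x : X) :
    TensorProduct.map l l' (freePartial F x f) = 0 := by
  obtain ⟨φ, i, j, hφ⟩ := hl
  obtain ⟨ψ, i', j', hψ⟩ := hl'
  have h := congrFun (congrFun (hf.sandwich_freePartial φ ψ (Matrix.single j i' 1) x) i) j'
  apply (TensorProduct.lid F F).injective
  rw [map_zero]
  refine Eq.trans ?_ h
  generalize freePartial F x f = t
  induction t using TensorProduct.induction_on with
  | zero => simp
  | tmul u v =>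
    simp [sandwich, hφ, hψ, Matrix.mul_apply, Matrix.single_apply, Finset.sum_ite_eq,
      ite_and, mul_ite, ite_mul]
  | add a b ha hb => simp only [map_add, ha, hb, Matrix.add_apply]

/-- An identity of block triangular matrices is a sum of products of identities
of the blocks. -/
theorem IsMatrixIdentity.mem_mul {f : FreeAlgebra F X} (hf : IsMatrixIdentity (ι ⊕ κ) F f) :
    f ∈ matrixIdentities F X ι * matrixIdentities F X κ := by
  obtain ⟨e, he, he'⟩ := (matrixIdentities F X ι).exists_projection
  obtain ⟨e₂, he₂, he₂'⟩ := (matrixIdentities F X κ).exists_projection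
  let E : FreeAlgebra F X ⊗[F] FreeAlgebra F X →ₗ[F] FreeAlgebra F X ⊗[F] FreeAlgebra F X :=
    TensorProduct.map e LinearMap.id
  let E₂ : FreeAlgebra F X ⊗[F] FreeAlgebra F X →ₗ[F] FreeAlgebra F X ⊗[F] FreeAlgebra F X :=
    TensorProduct.map LinearMap.id e₂
  have hvan : ∀ x, TensorProduct.map (LinearMap.id - e) (LinearMap.id - e₂)
      (freePartial F x f) = 0 := by
    refine fun x => TensorProduct.map_eq_zero_of_separating
      (Λ := matrixEntries F X ι) (Λ' := matrixEntries F X κ) ?_ ?_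
      fun l hl l' hl' => hf.map_entries hl hl' x
    · intro u hu
      simp [he' u (mem_matrixIdentities_of_entries hu)]
    · intro u hu
      simp [he₂' u (mem_matrixIdentities_of_entries hu)]
  have hdec : ∀ x, freePartial F x f = E (freePartial F x f) +
      E₂ (freePartial F x f - E (freePartial F x f)) := by
    intro x
    have h : ∀ t : FreeAlgebra F X ⊗[F] FreeAlgebra F X,
        TensorProduct.map (LinearMap.id - e) (LinearMap.id - e₂) t =
        t - E t - E₂ (t - E t) := by
      intro t
      induction t using TensorProduct.induction_on with
      | zero => simp
      | tmul u v =>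
        simp only [TensorProduct.map_tmul, LinearMap.sub_apply, LinearMap.id_apply, E, E₂,
          TensorProduct.sub_tmul, TensorProduct.tmul_sub, map_sub]
      | add a b ha hb =>
        simp only [map_add, ha, hb, map_sub]
        abel
    have h2 := (h _).symm.trans (hvan x)
    rw [sub_eq_zero] at h2
    rw [← h2]
    abel
  have hEμ : ∀ x t, E (tensorCommutator F x (E t)) = tensorCommutator F x (E t) := by
    intro x t
    induction t using TensorProduct.induction_on with
    | zero => simp
    | tmul u v =>
      have : e u * FreeAlgebra.ι F x ∈ matrixIdentities F X ι := fun ψ => by simp [he u ψ]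
      simp [E, tensorCommutator_tmul, he' _ this, he' _ (he u)]
    | add a b ha hb => simp only [map_add, ha, hb]
  have hE₂μ : ∀ x t, E₂ (tensorCommutator F x (E₂ t)) = tensorCommutator F x (E₂ t) := by
    intro x t
    induction t using TensorProduct.induction_on with
    | zero => simp
    | tmul u v =>
      have : FreeAlgebra.ι F x * e₂ v ∈ matrixIdentities F X κ := fun ψ => by simp [he₂ v ψ]
      simp [E₂, tensorCommutator_tmul, he₂' _ this, he₂' _ (he₂ v)]
    | add a b ha hb => simp only [map_add, ha, hb]
  have hmulμ : ∀ x t, LinearMap.mul' F (FreeAlgebra F X) (tensorCommutator F x t) = 0 := by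
    intro x t
    induction t using TensorProduct.induction_on with
    | zero => simp
    | tmul u v => simp [tensorCommutator_tmul, mul_assoc]
    | add a b ha hb => simp only [map_add, ha, hb, add_zero]
  have hmem : ∀ t, LinearMap.mul' F (FreeAlgebra F X) (E₂ (E t)) ∈
      matrixIdentities F X ι * matrixIdentities F X κ := by
    intro t
    induction t using TensorProduct.induction_on with
    | zero => simp
    | tmul u v => simpa [E, E₂] using Submodule.mul_mem_mul (he u) (he₂ v)
    | add a b ha hb => simp only [map_add]; exact add_mem ha hb
  let φ₀ : FreeAlgebra F X →ₐ[F] Matrix ι ι F := FreeAlgebra.lift F 0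
  let ψ₀ : FreeAlgebra F X →ₐ[F] Matrix κ κ F := FreeAlgebra.lift F 0
  have hf₁ : f ∈ matrixIdentities F X ι := fun φ => (hf.diagonal φ ψ₀).1
  have hf₂ : f ∈ matrixIdentities F X κ := fun ψ => (hf.diagonal φ₀ ψ).2
  obtain ⟨s, hs⟩ := exists_sum_tensorCommutator f
  have hsum := hs s subset_rfl
  set α := ∑ x ∈ s, tensorCommutator F x (E (freePartial F x f)) with hα
  set β := ∑ x ∈ s, tensorCommutator F x (E₂ (freePartial F x f - E (freePartial F x f)))
    with hβ
  have hαβ : f ⊗ₜ[F] (1 : FreeAlgebra F X) - α = (1 : FreeAlgebra F X) ⊗ₜ[F] f + β := by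
    have : f ⊗ₜ[F] (1 : FreeAlgebra F X) - (1 : FreeAlgebra F X) ⊗ₜ[F] f = α + β := by
      rw [hsum, hα, hβ, ← Finset.sum_add_distrib]
      refine Finset.sum_congr rfl fun x _ => ?_
      rw [← map_add, ← hdec]
    rw [sub_eq_iff_eq_add] at this ⊢
    rw [this]
    abel
  have h1 : E (f ⊗ₜ[F] (1 : FreeAlgebra F X) - α) = f ⊗ₜ[F] (1 : FreeAlgebra F X) - α := by
    rw [map_sub, hα, map_sum]
    simp only [hEμ]
    simp [E, he' f hf₁]
  have h2 : E₂ (f ⊗ₜ[F] (1 : FreeAlgebra F X) - α) = f ⊗ₜ[F] (1 : FreeAlgebra F X) - α := by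
    rw [hαβ, map_add, hβ, map_sum]
    simp only [hE₂μ]
    simp [E₂, he₂' f hf₂]
  have h3 := hmem (f ⊗ₜ[F] (1 : FreeAlgebra F X) - α)
  rw [h1, h2, map_sub, hα, map_sum] at h3
  simpa [hmulμ] using h3

end Lewin

section NagataHigman

variable {F R : Type*} [Field F] [Ring R] [Algebra F R]

open Polynomial in
lemma Polynomial.coeff_mem_of_eval_mem [Infinite F] {W : Submodule F R} {p : R[X]}
    (hp : ∀ t : F, p.eval (algebraMap F R t) ∈ W) (k : ℕ) : p.coeff k ∈ W := by
  by_contra hk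
  obtain ⟨l, hl, hW⟩ := Submodule.exists_le_ker_of_notMem hk
  let q : F[X] := p.sum fun i a => monomial i (l a)
  have hq : q = 0 := by
    refine Polynomial.funext fun t => ?_
    have h : l (p.eval (algebraMap F R t)) = 0 := hW (hp t)
    rw [eval_eq_sum, Polynomial.sum, map_sum] at h
    simp only [q, Polynomial.sum, eval_finsetSum, eval_monomial, eval_zero]
    rw [← h]
    refine Finset.sum_congr rfl fun i _ => ?_
    rw [← map_pow, ← Algebra.commutes, ← Algebra.smul_def, map_smul, smul_eq_mul, mul_comm]
  have h := congrArg (coeff · k) hq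
  simp only [q, Polynomial.sum, finsetSum_coeff, coeff_monomial, coeff_zero,
    Finset.sum_ite_eq', mem_support_iff] at h
  by_cases h0 : p.coeff k = 0
  · exact hl (by rw [h0, map_zero])
  · exact hl (by simpa [h0] using h)

/-- The sum of `x ^ i * y * x ^ (n - i)`, the linearisation of the `(n + 1)`-st power. -/
def powDerivative (n : ℕ) (x y : R) : R := ∑ i ∈ Finset.range (n + 1), x ^ i * y * x ^ (n - i)

lemma powDerivative_succ (n : ℕ) (x y : R) :
    powDerivative (n + 1) x y = powDerivative n x y * x + x ^ (n + 1) * y := by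
  rw [powDerivative, Finset.sum_range_succ, powDerivative, Finset.sum_mul]
  congr 1
  · refine Finset.sum_congr rfl fun i hi => ?_
    rw [Nat.succ_sub (Finset.mem_range_succ_iff.mp hi), pow_succ, mul_assoc _ _ x]
  · simp

open Polynomial in
lemma coeff_one_linear_pow (n : ℕ) (x y : R) :
    ((C x + C y * X) ^ n).coeff 0 = x ^ n ∧
      ((C x + C y * X) ^ (n + 1)).coeff 1 = powDerivative n x y := by
  have h0 : ∀ n, ((C x + C y * X) ^ n).coeff 0 = x ^ n := by
    intro n
    induction n with
    | zero => simp
    | succ n ih => rw [pow_succ, mul_coeff_zero, ih, pow_succ]; simp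
  refine ⟨h0 n, ?_⟩
  induction n with
  | zero => simp [powDerivative]
  | succ n ih =>
    rw [pow_succ, mul_coeff_one, ih, h0, powDerivative_succ, add_comm]
    simp

lemma powDerivative_mem [Infinite F] {S J : Submodule F R} {n : ℕ}
    (hpow : ∀ x ∈ S, x ^ (n + 1) ∈ J) {x y : R} (hx : x ∈ S) (hy : y ∈ S) :
    powDerivative n x y ∈ J := by
  rw [← (coeff_one_linear_pow n x y).2]
  refine Polynomial.coeff_mem_of_eval_mem (fun t => ?_) 1
  let e := Polynomial.eval₂RingHom' (RingHom.id R) (algebraMap F R t)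
    fun a => (Algebra.commutes t a).symm
  have he : e ((Polynomial.C x + Polynomial.C y * Polynomial.X) ^ (n + 1)) =
      (x + t • y) ^ (n + 1) := by
    rw [map_pow]
    congr 1
    have hC : ∀ a, e (Polynomial.C a) = a := fun a => Polynomial.eval_C
    have hX : e Polynomial.X = algebraMap F R t := Polynomial.eval_X
    rw [map_add, map_mul, hC, hC, hX, Algebra.smul_def, Algebra.commutes]
  change e _ ∈ J
  rw [he]
  exact hpow _ (S.add_mem hx (S.smul_mem t hy))

lemma pow_mul_mul_pow_mem [CharZero F] {S J : Submodule F R}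
    (hSl : ∀ a, ∀ s ∈ S, a * s ∈ S) (hSr : ∀ a, ∀ s ∈ S, s * a ∈ S)
    (hJl : ∀ a, ∀ s ∈ J, a * s ∈ J) (hJr : ∀ a, ∀ s ∈ J, s * a ∈ J) {n : ℕ}
    (hpow : ∀ x ∈ S, x ^ (n + 1) ∈ J) {x y z : R} (hx : x ∈ S) (hy : y ∈ S) (hz : z ∈ S) :
    x ^ n * z * y ^ n ∈ J := by
  have h1 : ∑ j ∈ Finset.range (n + 1), powDerivative n x (z * y ^ j) * y ^ (n - j) ∈ J :=
    sum_mem fun j _ => hJr _ _ (powDerivative_mem hpow hx (hSr _ _ hz))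
  have h2 : ∑ j ∈ Finset.range (n + 1), powDerivative n x (z * y ^ j) * y ^ (n - j) =
      ∑ i ∈ Finset.range (n + 1), x ^ i * z * powDerivative n y (x ^ (n - i)) := by
    simp only [powDerivative, Finset.sum_mul, Finset.mul_sum]
    rw [Finset.sum_comm]
    simp only [mul_assoc]
  rw [h2, Finset.sum_range_succ] at h1
  have h3 : ∑ i ∈ Finset.range n, x ^ i * z * powDerivative n y (x ^ (n - i)) ∈ J := by
    refine sum_mem fun i hi => hJl _ _ (powDerivative_mem hpow hy ?_)
    obtain ⟨k, hk⟩ := Nat.exists_eq_succ_of_ne_zero (Nat.sub_pos_of_lt (Finset.mem_range.mp hi)).ne'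
    rw [hk, pow_succ]
    exact hSl _ _ hx
  have h4 := (J.add_mem_iff_right h3).mp h1
  have h5 : powDerivative n y (x ^ (n - n)) = ((n + 1 : ℕ) : F) • y ^ n := by
    rw [powDerivative, Finset.sum_congr rfl (g := fun _ => y ^ n), Finset.sum_const,
      Finset.card_range, Nat.cast_smul_eq_nsmul]
    intro i hi
    rw [Nat.sub_self, pow_zero, mul_one, ← pow_add,
      Nat.add_sub_cancel' (Finset.mem_range_succ_iff.mp hi)]
  rw [h5, mul_smul_comm] at h4
  exact (J.smul_mem_iff (Nat.cast_ne_zero.mpr n.succ_ne_zero)).mp h4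

/-- The Nagata–Higman theorem, relative to an ideal `J`. -/
theorem exists_prod_mem_of_pow_mem [CharZero F] {S : Submodule F R}
    (hSl : ∀ a, ∀ s ∈ S, a * s ∈ S) (hSr : ∀ a, ∀ s ∈ S, s * a ∈ S) (n : ℕ) :
    ∀ J : Submodule F R, (∀ a, ∀ s ∈ J, a * s ∈ J) → (∀ a, ∀ s ∈ J, s * a ∈ J) →
      (∀ x ∈ S, x ^ n ∈ J) →
      ∃ N : ℕ, ∀ l : List R, N ≤ l.length → (∀ s ∈ l, s ∈ S) → l.prod ∈ J := by
  induction n with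
  | zero =>
    intro J hJl _ hpow
    have h1 : (1 : R) ∈ J := by simpa using hpow 0 S.zero_mem
    exact ⟨0, fun l _ _ => by simpa using hJl l.prod 1 h1⟩
  | succ n ih =>
    intro J hJl hJr hpow
    let T : Submodule F R := Submodule.span F {w | ∃ a b, ∃ x ∈ S, w = a * x ^ n * b}
    have hTl : ∀ a, ∀ s ∈ T, a * s ∈ T := by
      intro a s hs
      refine Submodule.span_induction ?_ (by simp) (fun _ _ _ _ h h' => ?_) (fun c _ _ h => ?_) hs
      · rintro _ ⟨b, c, x, hx, rfl⟩
        exact Submodule.subset_span ⟨a * b, c, x, hx, by simp only [mul_assoc]⟩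
      · rw [mul_add]; exact add_mem h h'
      · rw [mul_smul_comm]; exact T.smul_mem c h
    have hTr : ∀ a, ∀ s ∈ T, s * a ∈ T := by
      intro a s hs
      refine Submodule.span_induction ?_ (by simp) (fun _ _ _ _ h h' => ?_) (fun c _ _ h => ?_) hs
      · rintro _ ⟨b, c, x, hx, rfl⟩
        exact Submodule.subset_span ⟨b, c * a, x, hx, by simp only [mul_assoc]⟩
      · rw [add_mul]; exact add_mem h h'
      · rw [smul_mul_assoc]; exact T.smul_mem c h
    have hTT : ∀ t ∈ T, ∀ s ∈ S, ∀ t' ∈ T, t * s * t' ∈ J := by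
      intro t ht s hs t' ht'
      refine Submodule.span_induction₂ (p := fun t t' _ _ => t * s * t' ∈ J) ?_ ?_ ?_ ?_ ?_ ?_ ?_
        ht ht'
      · rintro _ _ ⟨a, b, x, hx, rfl⟩ ⟨a', b', y, hy, rfl⟩
        have h := hJl a _ (hJr b' _ (pow_mul_mul_pow_mem hSl hSr hJl hJr hpow hx hy
          (hSl b _ (hSr a' _ hs))))
        simpa only [mul_assoc] using h
      · intro y _; simp
      · intro y _; simp
      · intro a b c _ _ _ h h'; simpa only [add_mul] using add_mem h h'
      · intro a b c _ _ _ h h'; simpa only [mul_add] using add_mem h h'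
      · intro r a b _ _ h; simpa only [smul_mul_assoc] using J.smul_mem r h
      · intro r a b _ _ h; simpa only [mul_smul_comm] using J.smul_mem r h
    obtain ⟨N, hN⟩ := ih (J ⊔ T)
      (fun a s hs => by
        obtain ⟨j, hj, t, ht, rfl⟩ := Submodule.mem_sup.mp hs
        rw [mul_add]
        exact Submodule.add_mem_sup (hJl a j hj) (hTl a t ht))
      (fun a s hs => by
        obtain ⟨j, hj, t, ht, rfl⟩ := Submodule.mem_sup.mp hs
        rw [add_mul]
        exact Submodule.add_mem_sup (hJr a j hj) (hTr a t ht))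
      (fun x hx => Submodule.mem_sup_right (Submodule.subset_span ⟨1, 1, x, hx, by simp⟩))
    refine ⟨2 * N + 1, fun l hl hlS => ?_⟩
    obtain ⟨j, hj, t, ht, hjt⟩ := Submodule.mem_sup.mp
      (hN (l.take N) (by simp; omega) fun s hs => hlS s (List.mem_of_mem_take hs))
    obtain ⟨s, l', hsl'⟩ : ∃ s l', l.drop N = s :: l' :=
      List.exists_cons_of_length_pos (by simp; omega)
    have hmem : ∀ u ∈ s :: l', u ∈ S := fun u hu =>
      hlS u (List.mem_of_mem_drop (by rw [hsl']; exact hu))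
    have hlen : (s :: l').length + N = l.length := by rw [← hsl']; simp; omega
    obtain ⟨j', hj', t', ht', hjt'⟩ := Submodule.mem_sup.mp
      (hN l' (by simp at hlen; omega) fun u hu => hmem u (List.mem_cons_of_mem _ hu))
    have hprod : l.prod = (j + t) * (s * (j' + t')) := by
      rw [hjt, hjt', ← List.prod_cons, ← hsl', List.prod_take_mul_prod_drop]
    have hexp : (j + t) * (s * (j' + t')) =
        j * (s * (j' + t')) + (t * s * j' + t * s * t') := by noncomm_ring
    rw [hprod, hexp]
    exact add_mem (hJr _ _ hj)
      (add_mem (hJl _ _ hj') (hTT t ht s (hmem s (by simp)) t' ht'))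

end NagataHigman

section PermutationIdentity

variable {F A : Type*} [Field F] [Ring A] [Algebra F A]

open Finset in
lemma sum_neg_one_pow_card_superset {k : ℕ} {T : Finset (Fin k)} (hT : T ≠ univ) :
    ∑ S : Finset (Fin k), (if T ⊆ S then (-1 : F) ^ #S else 0) = 0 := by
  obtain ⟨i, hi⟩ : ∃ i, i ∉ T := by
    by_contra h
    push Not at h
    exact hT (eq_univ_of_forall h)
  refine sum_involution (fun S _ => symmDiff S {i}) ?_ ?_ ?_ ?_
  · intro S _
    by_cases hS : i ∈ S
    · have h1 : symmDiff S {i} = S.erase i := by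
        ext j; by_cases hj : j = i <;> simp [mem_symmDiff, hj, hS]
      have h2 : T ⊆ S.erase i ↔ T ⊆ S :=
        ⟨fun h => h.trans (erase_subset _ _), fun h => subset_erase.mpr ⟨h, hi⟩⟩
      have h3 : #S = #(S.erase i) + 1 := (card_erase_add_one hS).symm
      rw [h1, h3]
      simp only [h2]
      split_ifs <;> ring
    · have h1 : symmDiff S {i} = insert i S := by
        ext j; by_cases hj : j = i <;> simp [mem_symmDiff, hj, hS]
      have h2 : T ⊆ insert i S ↔ T ⊆ S := subset_insert_iff_of_notMem hi
      rw [h1, card_insert_of_notMem hS]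
      simp only [h2]
      split_ifs <;> ring
  · intro S _ _ h
    have : i ∈ symmDiff S {i} ↔ i ∈ S := by rw [h]
    simp [mem_symmDiff] at this
  · intros; simp
  · intro S _; simp

open Finset in
lemma sum_neg_one_pow_prod_ofFn {n k : ℕ} (w₀ : Fin k → Fin n) (z : Fin k → A) {m : ℕ}
    (w : Fin m → Fin n) :
    ∑ S : Finset (Fin k), (-1 : F) ^ #S •
        (List.ofFn fun p => ∑ i ∈ S.filter (w₀ · = w p), z i).prod =
      ∑ h : Fin m → Fin k, if Function.Surjective h ∧ w₀ ∘ h = w then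
        (-1 : F) ^ k • (List.ofFn fun p => z (h p)).prod else 0 := by
  have h1 : ∀ S : Finset (Fin k), (List.ofFn fun p => ∑ i ∈ S.filter (w₀ · = w p), z i).prod =
      ∑ h : Fin m → Fin k, if univ.image h ⊆ S ∧ w₀ ∘ h = w then
        (List.ofFn fun p => z (h p)).prod else 0 := by
    intro S
    have := (MultilinearMap.mkPiAlgebraFin F m A).map_sum_finset (fun _ i => z i)
      (fun p => S.filter (w₀ · = w p))
    simp only [MultilinearMap.mkPiAlgebraFin_apply] at this
    rw [this, ← sum_filter]
    refine sum_congr ?_ fun _ _ => rfl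
    ext h
    simp only [Fintype.mem_piFinset, mem_filter, mem_univ, true_and, image_subset_iff,
      funext_iff, Function.comp_apply]
    exact ⟨fun H => ⟨fun p _ => (H p).1, fun p => (H p).2⟩, fun H p => ⟨H.1 p trivial, H.2 p⟩⟩
  simp only [h1, smul_sum, smul_ite, smul_zero]
  rw [sum_comm]
  refine sum_congr rfl fun h _ => ?_
  by_cases hw : w₀ ∘ h = w
  · by_cases hs : Function.Surjective h
    · have himg : univ.image h = univ := image_univ_of_surjective hs
      rw [sum_eq_single univ]
      · simp [hw, hs]
      · intro S _ hS
        rw [if_neg]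
        rw [himg]
        exact fun H => hS (univ_subset_iff.mp H.1)
      · simp
    · have himg : univ.image h ≠ univ := fun H => hs fun i => by
        have : i ∈ univ.image h := by rw [H]; simp
        simpa using this
      have h2 := congrArg (· • (List.ofFn fun p => z (h p)).prod)
        (sum_neg_one_pow_card_superset (F := F) himg)
      simp only [sum_smul, zero_smul, ite_smul] at h2
      simpa [hs, hw] using h2
  · simp [hw]

lemma FreeAlgebra.exists_lift_eq_sum {n : ℕ} (f : FreeAlgebra F (Fin n)) :
    ∃ p : FreeMonoid (Fin n) →₀ F, (f ≠ 0 → p ≠ 0) ∧ ∀ x : Fin n → A,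
      FreeAlgebra.lift F x f = p.sum fun w c => c • (w.toList.map x).prod := by
  refine ⟨(FreeAlgebra.equivMonoidAlgebraFreeMonoid f).coeff, fun hf h => hf ?_, fun x => ?_⟩
  · apply FreeAlgebra.equivMonoidAlgebraFreeMonoid.injective
    rw [map_zero]
    ext w
    rw [h]
    rfl
  · generalize hp : FreeAlgebra.equivMonoidAlgebraFreeMonoid f = p
    obtain rfl : f = FreeAlgebra.equivMonoidAlgebraFreeMonoid.symm p := by simp [← hp]
    clear hp
    have h : (FreeAlgebra.lift F x).comp FreeAlgebra.equivMonoidAlgebraFreeMonoid.symm.toAlgHom =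
        MonoidAlgebra.lift F A (FreeMonoid (Fin n)) (FreeMonoid.lift x) := by
      have h' : ((FreeAlgebra.lift F x : FreeAlgebra F (Fin n) →ₐ[F] A) : _ →* A).comp
          (FreeMonoid.lift (FreeAlgebra.ι F)) = FreeMonoid.lift x := by
        ext y
        simp
      ext y
      simpa [FreeAlgebra.equivMonoidAlgebraFreeMonoid] using DFunLike.congr_fun h' y
    refine (DFunLike.congr_fun h p).trans ?_
    rw [MonoidAlgebra.lift_apply]
    simp only [FreeMonoid.lift_apply]

open Finset in
lemma sum_neg_one_pow_prod_map {n k : ℕ} (u : Fin k → Fin n) (z : Fin k → A) (w : List (Fin n))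
    (hw : w.length ≤ k) :
    ∑ S : Finset (Fin k), (-1 : F) ^ #S •
        (w.map fun j => ∑ i ∈ S.filter (u · = j), z i).prod =
      (-1 : F) ^ k • ∑ g : Equiv.Perm (Fin k),
        if List.ofFn (u ∘ g) = w then (List.ofFn (z ∘ g)).prod else 0 := by
  obtain ⟨m, v, rfl⟩ : ∃ m, ∃ v : Fin m → Fin n, w = List.ofFn v :=
    ⟨w.length, w.get, (List.ofFn_get w).symm⟩
  have h := sum_neg_one_pow_prod_ofFn (F := F) u z v
  simp only [List.map_ofFn]
  refine h.trans ?_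
  rw [List.length_ofFn] at hw
  rw [smul_sum, ← sum_filter]
  simp only [smul_ite, smul_zero]
  rw [← sum_filter]
  by_cases hlen : m = k
  · subst hlen
    refine sum_bij' (fun h hh => Equiv.ofBijective h
      (Finite.surjective_iff_bijective.mp (mem_filter.mp hh).2.1)) (fun g _ => g) ?_ ?_ ?_ ?_ ?_
    · intro h hh
      refine mem_filter.mpr ⟨mem_univ _, ?_⟩
      exact congrArg List.ofFn (mem_filter.mp hh).2.2
    · intro g hg
      exact mem_filter.mpr ⟨mem_univ _, g.surjective,
        List.ofFn_injective (mem_filter.mp hg).2⟩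
    · intros; rfl
    · intros; ext; rfl
    · intros; rfl
  · rw [filter_false_of_mem, filter_false_of_mem]
    · simp
    · intro g _ h
      have := congrArg List.length h
      simp only [List.length_ofFn] at this
      exact hlen this.symm
    · intro h _ hh
      have := Fintype.card_le_of_surjective _ hh.1
      simp only [Fintype.card_fin] at this
      exact hlen (le_antisymm hw this)

open Finset in
/-- A polynomial identity implies a multilinear one. -/
theorem exists_permutation_identity {n : ℕ} {f : FreeAlgebra F (Fin n)} (hf : f ≠ 0)
    (hA : ∀ φ : FreeAlgebra F (Fin n) →ₐ[F] A, φ f = 0) :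
    ∃ (k : ℕ) (β : Equiv.Perm (Fin k) → F), β 1 ≠ 0 ∧
      ∀ z : Fin k → A, ∑ g, β g • (List.ofFn (z ∘ g)).prod = 0 := by
  obtain ⟨p, hp, hlift⟩ := FreeAlgebra.exists_lift_eq_sum (A := A) f
  obtain ⟨w₀, hw₀, hmax⟩ := p.support.exists_max_image (fun w => w.toList.length)
    (Finsupp.support_nonempty_iff.mpr (hp hf))
  obtain ⟨k, u, hu⟩ : ∃ k, ∃ u : Fin k → Fin n, w₀ = FreeMonoid.ofList (List.ofFn u) :=
    ⟨w₀.toList.length, w₀.toList.get, by simp⟩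
  subst hu
  refine ⟨k, fun g => p (FreeMonoid.ofList (List.ofFn (u ∘ g))), ?_, fun z => ?_⟩
  · simpa using hw₀
  · have key : ∑ w ∈ p.support, p w • ∑ S : Finset (Fin k), (-1 : F) ^ #S •
        (w.toList.map fun j => ∑ i ∈ S.filter (u · = j), z i).prod = 0 := by
      simp only [smul_sum]
      rw [sum_comm]
      refine sum_eq_zero fun S _ => ?_
      simp only [smul_comm (p _)]
      have h := hlift fun j => ∑ i ∈ S.filter (u · = j), z i
      rw [hA, Finsupp.sum] at h
      rw [← smul_sum, ← h, smul_zero]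
    rw [sum_congr rfl fun w hw => by
      rw [sum_neg_one_pow_prod_map u z w.toList (by simpa using hmax w hw), smul_comm],
      ← smul_sum,
      smul_eq_zero_iff_right (pow_ne_zero _ (neg_ne_zero.mpr one_ne_zero))] at key
    simp only [smul_sum, smul_ite, smul_zero] at key
    rw [sum_comm] at key
    rw [← key]
    refine sum_congr rfl fun g _ => ?_
    rw [sum_eq_single (FreeMonoid.ofList (List.ofFn (u ∘ g)))]
    · exact (if_pos rfl).symm
    · intro w _ hw
      rw [if_neg]
      exact fun h => hw (congrArg FreeMonoid.ofList h).symm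
    · intro h
      rw [Finsupp.notMem_support_iff.mp h]
      simp

end PermutationIdentity

section Combinatorics

variable {V : Type*} [LinearOrder V]

lemma List.exists_blocks_of_sublist {V : Type*} {s l : List V} (h : s.Sublist l) :
    ∃ (p : List V) (bs : List (V × List V)),
      l = p ++ bs.flatMap (fun b => b.1 :: b.2) ∧ bs.map Prod.fst = s := by
  induction h with
  | slnil => exact ⟨[], [], rfl, rfl⟩
  | cons a _ ih =>
    obtain ⟨p, bs, rfl, h⟩ := ih
    exact ⟨a :: p, bs, rfl, h⟩
  | cons_cons a _ ih =>
    obtain ⟨p, bs, rfl, h⟩ := ih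
    exact ⟨[], (a, p) :: bs, rfl, by simp [h]⟩

lemma List.flatMap_lt_of_perm {L M : List (V × List V)} (hL : L.Pairwise fun a b => b.1 < a.1)
    (hp : M.Perm L) (hne : M ≠ L) :
    M.flatMap (fun b => b.1 :: b.2) < L.flatMap (fun b => b.1 :: b.2) := by
  induction L generalizing M with
  | nil => exact absurd (List.perm_nil.mp hp) hne
  | cons b L ih =>
    rcases M with _ | ⟨c, M⟩
    · simp at hp
    · by_cases hcb : c = b
      · subst hcb
        have h := ih (List.pairwise_cons.mp hL).2 (List.perm_cons c |>.mp hp)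
          (fun h => hne (by rw [h]))
        simp only [List.flatMap_cons]
        exact List.Lex.append_left (· < ·) h _
      · have hc : c ∈ L := by
          have : c ∈ b :: L := hp.subset (List.mem_cons_self)
          simpa [hcb] using this
        simp only [List.flatMap_cons, List.cons_append]
        exact List.Lex.rel ((List.pairwise_cons.mp hL).1 c hc)

lemma List.eq_of_perm_of_map_eq {γ : Type*} {c : V → γ} {l l' : List V}
    (hl : l.Pairwise fun a b => c a = c b → a < b) (hl' : l'.Pairwise fun a b => c a = c b → a < b)
    (hp : l.Perm l') (hc : l.map c = l'.map c) : l = l' := by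
  induction l generalizing l' with
  | nil => exact (List.nil_perm.mp hp).symm
  | cons a t ih =>
    rcases l' with _ | ⟨b, t'⟩
    · simp at hp
    · simp only [List.map_cons, List.cons.injEq] at hc
      rw [List.pairwise_cons] at hl hl'
      by_cases hab : a = b
      · subst hab
        rw [ih hl.2 hl'.2 (List.perm_cons a |>.mp hp) hc.2]
      · have hb : b ∈ t := by
          have : b ∈ a :: t := hp.symm.subset List.mem_cons_self
          simpa [Ne.symm hab] using this
        have ha : a ∈ t' := by
          have : a ∈ b :: t' := hp.subset List.mem_cons_self
          simpa [hab] using this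
        exact absurd (hl.1 b hb hc.1) (hl'.1 a ha hc.1.symm).asymm

/-- Colour each entry by the length of a longest descending sublist starting there. -/
lemma List.exists_coloring {l : List V} (hl : l.Nodup) :
    ∃ c : V → ℕ, (l.Pairwise fun a b => c a = c b → a < b) ∧
      ∀ a ∈ l, ∃ s, (a :: s).Sublist l ∧ (a :: s).Pairwise (· > ·) ∧ s.length = c a := by
  induction l with
  | nil => exact ⟨fun _ => 0, List.Pairwise.nil, by simp⟩
  | cons a t ih =>
    rw [List.nodup_cons] at hl
    obtain ⟨c, hc, hs⟩ := ih hl.2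
    obtain ⟨n, hn, hn'⟩ : ∃ n, (∀ b ∈ t, b < a → c b < n) ∧
        (n = 0 ∨ ∃ b ∈ t, b < a ∧ n = c b + 1) := by
      by_cases h : (t.toFinset.filter (· < a)).Nonempty
      · obtain ⟨b, hb, hmax⟩ := Finset.exists_max_image _ c h
        simp only [Finset.mem_filter, List.mem_toFinset] at hb hmax
        exact ⟨c b + 1, fun b' h1 h2 => Nat.lt_succ_of_le (hmax b' ⟨h1, h2⟩),
          Or.inr ⟨b, hb.1, hb.2, rfl⟩⟩
      · refine ⟨0, fun b h1 h2 => absurd ⟨b, ?_⟩ h, Or.inl rfl⟩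
        simp [h1, h2]
    have hne : ∀ b ∈ t, b ≠ a := fun b hb h => hl.1 (h ▸ hb)
    have hupd : ∀ b ∈ t, Function.update c a n b = c b := fun b hb =>
      Function.update_of_ne (hne b hb) _ _
    refine ⟨Function.update c a n, List.pairwise_cons.mpr ⟨fun b hb h => ?_, ?_⟩, fun b hb => ?_⟩
    · rw [Function.update_self, hupd b hb] at h
      by_contra hba
      exact (hn b hb (lt_of_le_of_ne (not_lt.mp hba) (hne b hb))).ne h.symm
    · refine hc.imp_of_mem fun hx hy h => ?_
      rwa [hupd _ hx, hupd _ hy]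
    · rcases List.mem_cons.mp hb with rfl | hb
      · rw [Function.update_self]
        rcases hn' with rfl | ⟨b', hb', hlt, rfl⟩
        · exact ⟨[], by simp, by simp, rfl⟩
        · obtain ⟨s, h1, h2, h3⟩ := hs b' hb'
          refine ⟨b' :: s, h1.cons_cons _, List.pairwise_cons.mpr ⟨fun x hx => ?_, h2⟩,
            by simp [h3]⟩
          rcases List.mem_cons.mp hx with rfl | hx
          · exact hlt
          · exact ((List.pairwise_cons.mp h2).1 x hx).trans hlt
      · rw [hupd b hb]
        obtain ⟨s, h1, h2, h3⟩ := hs b hb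
        exact ⟨s, h1.cons _, h2, h3⟩

end Combinatorics

section Sparse

variable (F : Type*) {A : Type*} [Field F] [Ring A] [Algebra F A]

/-- The lists containing each element exactly once. -/
def Arrangement (V : Type*) : Type _ := {l : List V // l.Nodup ∧ ∀ v, v ∈ l}

namespace Arrangement

variable {V W : Type*}

instance [Fintype V] : Finite (Arrangement V) := by
  classical
  exact Finite.of_injective (fun l : Arrangement V => (⟨l.1, l.2.1⟩ : {l : List V // l.Nodup}))
    fun l l' h => Subtype.ext (Subtype.mk.inj h)

lemma perm (l l' : Arrangement V) : l.1.Perm l'.1 :=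
  (List.perm_ext_iff_of_nodup l.2.1 l'.2.1).mpr fun v => by simp [l.2.2, l'.2.2]

lemma length_eq [Fintype V] (l : Arrangement V) : l.1.length = Fintype.card V := by
  classical
  rw [← List.toFinset_card_of_nodup l.2.1, ← Finset.card_univ]
  congr 1
  ext v
  simp [l.2.2]

/-- Transport along a bijection. -/
def map (e : V ≃ W) (l : Arrangement V) : Arrangement W :=
  ⟨l.1.map e, l.2.1.map e.injective, fun w => List.mem_map.mpr ⟨e.symm w, l.2.2 _, by simp⟩⟩

/-- The product of the arguments in the given order. -/
def value (A : Type*) [Ring A] (l : Arrangement V) (z : V → A) : A := (l.1.map z).prod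

lemma value_map (e : V ≃ W) (l : Arrangement V) (z : W → A) :
    (l.map e).value A z = l.value A (z ∘ e) := by
  simp [value, map]

variable {F} {k : ℕ} {β : Equiv.Perm (Fin k) → F}

lemma value_mem_span_of_sublist [LinearOrder V] (hβ : β 1 ≠ 0)
    (hA : ∀ z : Fin k → A, ∑ g, β g • (List.ofFn (z ∘ g)).prod = 0) (l : Arrangement V)
    {s : List V} (hs : s.Sublist l.1) (hk : s.length = k) (hdec : s.Pairwise (· > ·)) :
    l.value A ∈ Submodule.span F {f | ∃ l' : Arrangement V, l'.1 < l.1 ∧ f = l'.value A} := by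
  classical
  obtain ⟨p, bs, hl, hbs⟩ := List.exists_blocks_of_sublist hs
  obtain rfl : bs.length = k := by rw [← hk, ← hbs, List.length_map]
  have hdec' : bs.Pairwise fun a b => b.1 < a.1 := by
    rw [← hbs, List.pairwise_map] at hdec
    exact hdec
  have hnd : bs.Nodup := hdec'.imp fun h h' => by subst h'; exact lt_irrefl _ h
  let B (g : Equiv.Perm (Fin bs.length)) : List (V × List V) := List.ofFn (bs.get ∘ g)
  have hBp : ∀ g, (B g).Perm bs := fun g => by
    refine (Equiv.Perm.ofFn_comp_perm g bs.get).trans ?_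
    rw [List.ofFn_get]
  have hflat : ∀ g, (p ++ (B g).flatMap fun b => b.1 :: b.2).Perm l.1 := fun g => by
    rw [hl]
    exact ((hBp g).flatMap_right _).append_left p
  let L (g : Equiv.Perm (Fin bs.length)) : Arrangement V :=
    ⟨p ++ (B g).flatMap fun b => b.1 :: b.2, (hflat g).nodup_iff.mpr l.2.1,
      fun v => (hflat g).mem_iff.mpr (l.2.2 v)⟩
  have hsum : ∑ g, β g • (L g).value A = 0 := by
    funext z
    have h := congrArg ((p.map z).prod * ·)
      (hA fun i => (((bs.get i).1 :: (bs.get i).2).map z).prod)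
    simp only [mul_zero, Finset.mul_sum, mul_smul_comm] at h
    rw [Finset.sum_apply, Pi.zero_apply, ← h]
    refine Finset.sum_congr rfl fun g _ => ?_
    simp only [Pi.smul_apply, value, L, B, List.map_append, List.prod_append]
    congr 2
    rw [List.flatMap, List.map_flatten, List.prod_flatten, List.map_map, List.map_map,
      List.map_ofFn]
    rfl
  have hL1 : L 1 = l := Subtype.ext (by simp [L, B, hl])
  rw [← Finset.add_sum_erase _ _ (Finset.mem_univ 1), hL1, add_eq_zero_iff_eq_neg] at hsum
  rw [← inv_smul_smul₀ hβ (l.value A), hsum]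
  refine Submodule.smul_mem _ _ (Submodule.neg_mem _ (Submodule.sum_mem _ fun g hg => ?_))
  refine Submodule.smul_mem _ _ (Submodule.subset_span ⟨L g, ?_, rfl⟩)
  have hlt : (B g).flatMap (fun b => b.1 :: b.2) < bs.flatMap (fun b => b.1 :: b.2) := by
    refine List.flatMap_lt_of_perm hdec' (hBp g) fun h => Finset.ne_of_mem_erase hg ?_
    have h' : List.ofFn (bs.get ∘ g) = List.ofFn bs.get := h.trans (List.ofFn_get bs).symm
    have h'' := List.ofFn_injective h'
    ext i
    exact congrArg Fin.val (List.nodup_iff_injective_get.mp hnd (congrFun h'' i))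
  change p ++ (B g).flatMap (fun b => b.1 :: b.2) < l.1
  rw [hl]
  exact List.Lex.append_left (· < ·) hlt p

variable [Fintype V]

variable (F A V) in
/-- The span of the multilinear monomials. -/
def valueSpan : Submodule F ((V → A) → A) :=
  Submodule.span F (Set.range fun l : Arrangement V => l.value A)

lemma valueSpan_eq [LinearOrder V] (hβ : β 1 ≠ 0)
    (hA : ∀ z : Fin k → A, ∑ g, β g • (List.ofFn (z ∘ g)).prod = 0) :
    valueSpan F A V = Submodule.span F (Set.range
      fun l : {l : Arrangement V // ∀ s : List V, s.Sublist l.1 → s.Pairwise (· > ·) →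
        s.length < k} => l.1.value A) := by
  refine le_antisymm (Submodule.span_le.mpr ?_) (Submodule.span_mono ?_)
  · rintro _ ⟨l, rfl⟩
    have hwf : WellFounded fun l l' : Arrangement V => l.1 < l'.1 := by
      have : IsTrans (Arrangement V) fun l l' => l.1 < l'.1 :=
        ⟨fun _ _ _ h h' => lt_trans h h'⟩
      have : Std.Irrefl fun l l' : Arrangement V => l.1 < l'.1 := ⟨fun _ => lt_irrefl _⟩
      exact Finite.wellFounded_of_trans_of_irrefl _
    induction l using hwf.induction with
    | _ l ih =>
    by_cases h : ∀ s : List V, s.Sublist l.1 → s.Pairwise (· > ·) → s.length < k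
    · exact Submodule.subset_span ⟨⟨l, h⟩, rfl⟩
    · push Not at h
      obtain ⟨s, hs, hdec, hk⟩ := h
      refine Submodule.span_le.mpr ?_ (value_mem_span_of_sublist hβ hA l
        ((List.take_sublist k s).trans hs) (by simp [hk]) (hdec.sublist (List.take_sublist k s)))
      rintro _ ⟨l', hlt, rfl⟩
      exact ih l' hlt
  · rintro _ ⟨l, rfl⟩
    exact ⟨l.1, rfl⟩

lemma card_le [LinearOrder V] (k : ℕ) : Nat.card {l : Arrangement V // ∀ s : List V,
    s.Sublist l.1 → s.Pairwise (· > ·) → s.length < k} ≤ k ^ (2 * Fintype.card V) := by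
  have hcol : ∀ l : {l : Arrangement V // ∀ s : List V, s.Sublist l.1 → s.Pairwise (· > ·) →
      s.length < k}, ∃ c : V → Fin k, l.1.1.Pairwise fun a b => c a = c b → a < b := fun l => by
    obtain ⟨c, hc, hs⟩ := List.exists_coloring l.1.2.1
    have hlt : ∀ v, c v < k := fun v => by
      obtain ⟨s, h1, h2, h3⟩ := hs v (l.1.2.2 v)
      have := l.2 _ h1 h2
      rw [List.length_cons] at this
      omega
    exact ⟨fun v => ⟨c v, hlt v⟩, hc.imp fun h h' => h (congrArg Fin.val h')⟩
  choose c hc using hcol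
  have hinj : Function.Injective fun l => ((c l, ⟨l.1.1.map (c l), by
      rw [List.length_map, length_eq]⟩) : (V → Fin k) × List.Vector (Fin k) (Fintype.card V)) := by
    intro l l' h
    have h1 : c l = c l' := congrArg Prod.fst h
    have h2 : l.1.1.map (c l) = l'.1.1.map (c l') := congrArg (fun p => p.2.1) h
    simp only [← h1] at h2
    refine Subtype.ext (Subtype.ext ?_)
    exact List.eq_of_perm_of_map_eq (hc l) (h1 ▸ hc l') (perm _ _) h2
  refine (Nat.card_le_card_of_injective _ hinj).trans_eq ?_
  rw [Nat.card_prod, Nat.card_eq_fintype_card, Nat.card_eq_fintype_card, card_vector,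
    Fintype.card_fun, Fintype.card_fin, two_mul, pow_add]

lemma finrank_valueSpan_le (hβ : β 1 ≠ 0)
    (hA : ∀ z : Fin k → A, ∑ g, β g • (List.ofFn (z ∘ g)).prod = 0) :
    Module.finrank F (valueSpan F A V) ≤ k ^ (2 * Fintype.card V) := by
  classical
  let : LinearOrder V := LinearOrder.lift' (Fintype.equivFin V) (Fintype.equivFin V).injective
  rw [valueSpan_eq hβ hA]
  have := Fintype.ofFinite {l : Arrangement V // ∀ s : List V, s.Sublist l.1 →
    s.Pairwise (· > ·) → s.length < k}
  refine (finrank_range_le_card _).trans ?_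
  rw [← Nat.card_eq_fintype_card]
  exact card_le k

end Arrangement
end Sparse

section Words

variable {ι κ A : Type*}

/-- The variables of a word, in order of occurrence. -/
def wordVars (l : List (ι ⊕ A)) : List ι := l.filterMap Sum.getLeft?

/-- Each variable occurs exactly once. -/
def IsMultilinearWord (l : List (ι ⊕ A)) : Prop :=
  (wordVars l).Nodup ∧ ∀ i, i ∈ wordVars l

@[simp] lemma wordVars_nil : wordVars ([] : List (ι ⊕ A)) = [] := rfl

@[simp] lemma wordVars_cons_inl (i : ι) (l : List (ι ⊕ A)) :
    wordVars (Sum.inl i :: l) = i :: wordVars l := rfl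

@[simp] lemma wordVars_cons_inr (a : A) (l : List (ι ⊕ A)) :
    wordVars (Sum.inr a :: l) = wordVars l := rfl

@[simp] lemma wordVars_append (l l' : List (ι ⊕ A)) :
    wordVars (l ++ l') = wordVars l ++ wordVars l' := by simp [wordVars]

/-- Substitute words for the variables of a word. -/
def wordSubst (h : ι → List (κ ⊕ A)) (l : List (ι ⊕ A)) : List (κ ⊕ A) :=
  l.flatMap (Sum.elim h fun a => [Sum.inr a])

lemma wordVars_subst (h : ι → List (κ ⊕ A)) (l : List (ι ⊕ A)) :
    wordVars (wordSubst h l) = (wordVars l).flatMap fun i => wordVars (h i) := by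
  induction l with
  | nil => rfl
  | cons a l ih =>
    have hc : wordSubst h (a :: l) = Sum.elim h (fun a => [Sum.inr a]) a ++ wordSubst h l := rfl
    rw [hc, wordVars_append, ih]
    cases a <;> simp

variable [Ring A]

/-- The value of a word with letters from a set of variables and from `A`. -/
def wordEval (l : List (ι ⊕ A)) (x : ι → A) : A := (l.map (Sum.elim x id)).prod

@[simp] lemma wordEval_nil (x : ι → A) : wordEval [] x = 1 := rfl

@[simp] lemma wordEval_cons_inl (i : ι) (l : List (ι ⊕ A)) (x : ι → A) :
    wordEval (Sum.inl i :: l) x = x i * wordEval l x := by simp [wordEval]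

@[simp] lemma wordEval_cons_inr (a : A) (l : List (ι ⊕ A)) (x : ι → A) :
    wordEval (Sum.inr a :: l) x = a * wordEval l x := by simp [wordEval]

@[simp] lemma wordEval_append (l l' : List (ι ⊕ A)) (x : ι → A) :
    wordEval (l ++ l') x = wordEval l x * wordEval l' x := by simp [wordEval]

lemma wordEval_subst (h : ι → List (κ ⊕ A)) (l : List (ι ⊕ A)) (x : κ → A) :
    wordEval (wordSubst h l) x = wordEval l fun i => wordEval (h i) x := by
  induction l with
  | nil => rfl
  | cons a l ih =>
    have hc : wordSubst h (a :: l) = Sum.elim h (fun a => [Sum.inr a]) a ++ wordSubst h l := rfl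
    rw [hc, wordEval_append, ih]
    cases a <;> simp

lemma wordEval_congr {l : List (ι ⊕ A)} {x y : ι → A} (h : ∀ i ∈ wordVars l, x i = y i) :
    wordEval l x = wordEval l y := by
  induction l with
  | nil => rfl
  | cons a l ih =>
    rcases a with i | a
    · simp only [wordVars_cons_inl, List.mem_cons, forall_eq_or_imp] at h
      simp [h.1, ih h.2]
    · simp only [wordVars_cons_inr] at h
      simp [ih h]

/-- A multilinear word is affine in each variable, without constant term. -/
lemma IsMultilinearWord.exists_eval_update [DecidableEq ι] {l : List (ι ⊕ A)}
    (hl : IsMultilinearWord l) (i : ι) (x : ι → A) :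
    ∃ a b : A, ∀ v, wordEval l (Function.update x i v) = a * v * b := by
  have key : ∀ l : List (ι ⊕ A), (wordVars l).Nodup → i ∈ wordVars l →
      ∃ a b : A, ∀ v, wordEval l (Function.update x i v) = a * v * b := by
    intro l
    induction l with
    | nil => simp
    | cons c l ih =>
      rcases c with j | c
      · simp only [wordVars_cons_inl, List.nodup_cons, List.mem_cons, wordEval_cons_inl]
        rintro ⟨hj, hn⟩ (rfl | hi)
        · refine ⟨1, wordEval l x, fun v => ?_⟩
          rw [Function.update_self, one_mul, wordEval_congr (y := x)]
          exact fun k hk => Function.update_of_ne (fun h => hj (by rwa [h] at hk)) _ _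
        · obtain ⟨a, b, h⟩ := ih hn hi
          refine ⟨x j * a, b, fun v => ?_⟩
          rw [h, Function.update_of_ne (fun h : j = i => hj (by rwa [h])), mul_assoc,
            mul_assoc, mul_assoc]
      · simp only [wordVars_cons_inr, wordEval_cons_inr]
        intro hn hi
        obtain ⟨a, b, h⟩ := ih hn hi
        exact ⟨c * a, b, fun v => by rw [h, mul_assoc, mul_assoc, mul_assoc]⟩
  exact key l hl.1 (hl.2 i)

lemma wordEval_eq_mul_prod [DecidableEq ι] {l : List (ι ⊕ A)} (hl : (wordVars l).Nodup) :
    ∃ (a : A) (y : ι → A), ∀ x, wordEval l x = a * ((wordVars l).map fun i => x i * y i).prod := by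
  induction l with
  | nil => exact ⟨1, 0, fun x => by simp⟩
  | cons c l ih =>
    rcases c with j | c
    · simp only [wordVars_cons_inl, List.nodup_cons] at hl
      obtain ⟨a, y, h⟩ := ih hl.2
      refine ⟨1, Function.update y j a, fun x => ?_⟩
      simp only [wordEval_cons_inl, wordVars_cons_inl, List.map_cons, List.prod_cons,
        Function.update_self, one_mul, h, mul_assoc]
      congr 3
      refine List.map_congr_left fun i hi => ?_
      rw [Function.update_of_ne (fun h => hl.1 (by rwa [h] at hi))]
    · obtain ⟨a, y, h⟩ := ih hl
      exact ⟨c * a, y, fun x => by simp [h, mul_assoc]⟩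

lemma IsMultilinearWord.exists_arrangement {l : List (ι ⊕ A)} (hl : IsMultilinearWord l) :
    ∃ (l' : Arrangement (Option (ι ⊕ ι))) (a : A) (y : ι → A), ∀ x,
      wordEval l x = l'.value A fun v => v.elim a (Sum.elim x y) := by
  classical
  obtain ⟨a, y, h⟩ := wordEval_eq_mul_prod hl.1
  refine ⟨⟨none :: (wordVars l).flatMap fun i => [some (Sum.inl i), some (Sum.inr i)],
    ?_, ?_⟩, a, y, fun x => ?_⟩
  · rw [List.nodup_cons]
    refine ⟨by simp, List.nodup_flatMap.mpr ⟨by simp, hl.1.imp fun hij => ?_⟩⟩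
    simp [Function.onFun, Ne.symm hij]
  · rintro (_ | i | i) <;> simp [hl.2]
  · rw [h]
    simp only [Arrangement.value, List.map_cons, List.prod_cons, List.map_flatMap, Option.elim]
    congr 1
    rw [List.flatMap, List.prod_flatten, List.map_map]
    congr 2
    ext i
    simp

end Words

section Sparse

variable {F A : Type*} [Field F] [Ring A] [Algebra F A] {k : ℕ} {β : Equiv.Perm (Fin k) → F}

lemma exists_sq_pow_lt_factorial (k : ℕ) : ∃ d : ℕ, (k ^ (2 * (2 * d + 1))) ^ 2 < d.factorial := by
  have h := (FloorSemiring.tendsto_pow_div_factorial_atTop ((k : ℝ) ^ 8)).const_mul ((k : ℝ) ^ 4)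
  rw [mul_zero] at h
  obtain ⟨d, hd⟩ := (h.eventually_lt_const one_pos).exists
  refine ⟨d, ?_⟩
  have hpos : (0 : ℝ) < d.factorial := by positivity
  rw [← mul_div_assoc, div_lt_one hpos] at hd
  have : ((k ^ (2 * (2 * d + 1))) ^ 2 : ℝ) = (k : ℝ) ^ 4 * ((k : ℝ) ^ 8) ^ d := by ring
  rw [← this] at hd
  exact_mod_cast hd

/-- The endomorphism permuting the arguments. -/
def permuteArgs (F A : Type*) [Field F] [Ring A] [Algebra F A] {V : Type*} (e : Equiv.Perm V) :
    ((V → A) → A) →ₗ[F] ((V → A) → A) :=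
  LinearMap.funLeft F A fun z => z ∘ e

lemma permuteArgs_mem_valueSpan {V : Type*} (e : Equiv.Perm V) (f : (V → A) → A)
    (hf : f ∈ Arrangement.valueSpan F A V) : permuteArgs F A e f ∈ Arrangement.valueSpan F A V := by
  have h : Arrangement.valueSpan F A V ≤
      (Arrangement.valueSpan F A V).comap (permuteArgs F A e) := Submodule.span_le.mpr ?_
  · exact h hf
  rintro _ ⟨l, rfl⟩
  refine Submodule.subset_span ⟨l.map e, ?_⟩
  funext z
  exact l.value_map e z

lemma Module.End.exists_linear_relation {M P : Type*} [AddCommGroup M] [Module F M] [Fintype P]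
    [FiniteDimensional F M] (T : P → Module.End F M)
    (hP : (Module.finrank F M) ^ 2 < Fintype.card P) :
    ∃ (α : P → F) (ρ₀ : P), α ρ₀ ≠ 0 ∧ ∀ m, ∑ ρ, α ρ • T ρ m = 0 := by
  have hdep : ¬ LinearIndependent F T := fun h => by
    have h1 := h.fintype_card_le_finrank
    rw [Module.finrank_linearMap, ← sq] at h1
    exact absurd h1 (not_le.mpr hP)
  obtain ⟨α, hα, ρ₀, hρ₀⟩ := Fintype.not_linearIndependent_iff.mp hdep
  refine ⟨α, ρ₀, hρ₀, fun m => ?_⟩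
  simpa using LinearMap.congr_fun hα m

lemma exists_permuteArgs_relation {V P : Type*} [Fintype V] [Fintype P] (e : P → Equiv.Perm V)
    (hP : (Module.finrank F (Arrangement.valueSpan F A V)) ^ 2 < Fintype.card P) :
    ∃ (α : P → F) (ρ₀ : P), α ρ₀ ≠ 0 ∧ ∀ (l : Arrangement V) (z : V → A),
      ∑ ρ, α ρ • l.value A (z ∘ e ρ) = 0 := by
  have hfin : FiniteDimensional F (Arrangement.valueSpan F A V) :=
    FiniteDimensional.span_of_finite F (Set.finite_range _)
  obtain ⟨α, ρ₀, hρ₀, hα⟩ := Module.End.exists_linear_relation (fun ρ =>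
    (permuteArgs F A (e ρ)).restrict (permuteArgs_mem_valueSpan (e ρ))) hP
  refine ⟨α, ρ₀, hρ₀, fun l z => ?_⟩
  have h1 := congrArg (Submodule.subtype _) (hα ⟨l.value A, Submodule.subset_span ⟨l, rfl⟩⟩)
  rw [map_sum] at h1
  have h2 := congrFun h1 z
  rw [Finset.sum_apply] at h2
  exact h2

/-- A sparse identity: a dependence relation among permutations of the variables that holds
for all multilinear words. -/
theorem exists_sparse_identity (hβ : β 1 ≠ 0)
    (hA : ∀ z : Fin k → A, ∑ g, β g • (List.ofFn (z ∘ g)).prod = 0) :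
    ∃ (d : ℕ) (α : Equiv.Perm (Fin d) → F), α 1 = 1 ∧ ∀ l : List (Fin d ⊕ A),
      IsMultilinearWord l → ∀ x, ∑ ρ, α ρ • wordEval l (x ∘ ρ) = 0 := by
  obtain ⟨d, hd⟩ := exists_sq_pow_lt_factorial k
  have hcard : (Module.finrank F (Arrangement.valueSpan F A (Option (Fin d ⊕ Fin d)))) ^ 2 <
      Fintype.card (Equiv.Perm (Fin d)) := by
    have h := Arrangement.finrank_valueSpan_le (V := Option (Fin d ⊕ Fin d)) hβ hA
    rw [Fintype.card_option, Fintype.card_sum, Fintype.card_fin, ← two_mul] at h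
    rw [Fintype.card_perm, Fintype.card_fin]
    exact (Nat.pow_le_pow_left h 2).trans_lt hd
  obtain ⟨α, ρ₀, hρ₀, hα⟩ := exists_permuteArgs_relation
    (fun ρ : Equiv.Perm (Fin d) => Equiv.optionCongr (Equiv.sumCongr ρ (Equiv.refl _))) hcard
  have key : ∀ l : List (Fin d ⊕ A), IsMultilinearWord l → ∀ x,
      ∑ ρ, α ρ • wordEval l (x ∘ ρ) = 0 := by
    intro l hl x
    obtain ⟨l', a, y, h⟩ := hl.exists_arrangement
    rw [← hα l' fun v => v.elim a (Sum.elim x y)]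
    refine Finset.sum_congr rfl fun ρ _ => ?_
    rw [h]
    congr 2
    funext v
    rcases v with _ | i | i <;> rfl
  refine ⟨d, fun σ => (α ρ₀)⁻¹ * α (ρ₀ * σ), by simp [hρ₀], fun l hl x => ?_⟩
  have h := key l hl (x ∘ ⇑ρ₀⁻¹)
  rw [← Equiv.sum_comp (Equiv.mulLeft ρ₀)] at h
  simp only [mul_smul, ← Finset.smul_sum]
  rw [← smul_zero (α ρ₀)⁻¹, ← h]
  congr 1
  refine Finset.sum_congr rfl fun σ _ => ?_
  congr 2
  funext i
  simp

end Sparse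

section Capelli

variable {F A ι X : Type*} [Field F] [Ring A] [Algebra F A]

lemma MultilinearMap.eq_zero_of_span_eq_top {M M' : Type*} [AddCommGroup M] [Module F M]
    [AddCommGroup M'] [Module F M'] [Finite ι] {s : Set M} (hs : Submodule.span F s = ⊤)
    {f : MultilinearMap F (fun _ : ι => M) M'} (hf : ∀ x : ι → M, (∀ i, x i ∈ s) → f x = 0) :
    f = 0 := by
  classical
  have := Fintype.ofFinite ι
  have key : ∀ (T : Finset ι) (x : ι → M), (∀ i ∉ T, x i ∈ s) → f x = 0 := by
    intro T
    induction T using Finset.induction_on with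
    | empty => exact fun x hx => hf x fun i => hx i (Finset.notMem_empty i)
    | insert i T hi ih =>
      intro x hx
      have h : ∀ v, f (Function.update x i v) = 0 := by
        intro v
        have hv : v ∈ Submodule.span F s := hs ▸ Submodule.mem_top
        induction hv using Submodule.span_induction with
        | mem v hv =>
          refine ih _ fun j hj => ?_
          by_cases hji : j = i
          · subst hji
            rwa [Function.update_self]
          · rw [Function.update_of_ne hji]
            exact hx j (by simp [hji, hj])
        | zero => exact f.map_update_zero x i
        | add v w _ _ hv hw => rw [f.map_update_add, hv, hw, add_zero]
        | smul c v _ hv => rw [f.map_update_smul, hv, smul_zero]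
      simpa using h (x i)
  ext x
  exact key Finset.univ x fun i hi => absurd (Finset.mem_univ i) hi

variable (F) in
/-- The multilinear map defined by a multilinear word. -/
def wordMultilinear (l : List (ι ⊕ A)) (hl : IsMultilinearWord l) :
    MultilinearMap F (fun _ : ι => A) A where
  toFun := wordEval l
  map_update_add' x i v w := by
    obtain ⟨a, b, h⟩ := hl.exists_eval_update i x
    simp only [h, mul_add, add_mul]
  map_update_smul' x i c v := by
    obtain ⟨a, b, h⟩ := hl.exists_eval_update i x
    simp only [h, mul_smul_comm, smul_mul_assoc]

variable (F A ι) in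
/-- `A` satisfies all Capelli identities alternating in variables indexed by `ι`. -/
def SatisfiesCapelli [Fintype ι] [DecidableEq ι] : Prop :=
  ∀ (l : List (ι ⊕ A)) (hl : IsMultilinearWord l),
    MultilinearMap.alternatization (wordMultilinear F l hl) = 0

lemma satisfiesCapelli_iff [Fintype ι] [DecidableEq ι] : SatisfiesCapelli F A ι ↔
    ∀ l : List (ι ⊕ A), IsMultilinearWord l → ∀ x : ι → A,
      ∑ σ : Equiv.Perm ι, σ.sign • wordEval l (x ∘ σ) = 0 := by
  refine forall₂_congr fun l hl => ?_
  rw [AlternatingMap.ext_iff]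
  refine forall_congr' fun x => ?_
  rw [MultilinearMap.alternatization_apply]
  rfl

lemma span_words_eq_top {a : X → A} (ha : Algebra.adjoin F (Set.range a) = ⊤) :
    Submodule.span F (Set.range fun w : List X => (w.map a).prod) = ⊤ := by
  rw [← Algebra.top_toSubmodule, ← ha, Algebra.adjoin_eq_span]
  congr 1
  ext z
  constructor
  · rintro ⟨w, rfl⟩
    refine Submonoid.list_prod_mem _ fun y hy => ?_
    obtain ⟨v, -, rfl⟩ := List.mem_map.mp hy
    exact Submonoid.subset_closure ⟨v, rfl⟩
  · intro hz
    obtain ⟨L, hL, rfl⟩ := Submonoid.exists_list_of_mem_closure hz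
    obtain ⟨w, rfl⟩ : L ∈ Set.range (List.map a) := by
      rw [Set.range_list_map]
      exact hL
    exact ⟨w, rfl⟩

/-- The alternating sum over evaluations on words in the generators. -/
def alternatingWordSum (a : X → A) {m : ℕ} (l : List (Fin m ⊕ A)) (w : Fin m → List X) : A :=
  ∑ σ : Equiv.Perm (Fin m), σ.sign • wordEval l fun i => ((w (σ i)).map a).prod

/-- Replace suffixes of words at the positions `e j`. -/
noncomputable def replaceAt {m d : ℕ} (e : Fin d ↪o Fin m) (u v : Fin d → List X)
    (w : Fin m → List X) :
    Fin m → List X :=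
  fun p => (Function.partialInv e p).elim (w p) fun j => u j ++ v j

lemma replaceAt_apply {m d : ℕ} (e : Fin d ↪o Fin m) (u v : Fin d → List X) (w : Fin m → List X)
    (j : Fin d) : replaceAt e u v w (e j) = u j ++ v j := by
  simp [replaceAt, Function.partialInv_left e.injective]

lemma replaceAt_of_notMem {m d : ℕ} (e : Fin d ↪o Fin m) (u v : Fin d → List X)
    (w : Fin m → List X) {p : Fin m} (hp : ∀ j, e j ≠ p) : replaceAt e u v w p = w p := by
  have : Function.partialInv e p = none := by
    rw [Option.eq_none_iff_forall_ne_some]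
    exact fun j hj => hp j ((e.injective.isPartialInv j p).mp hj)
  simp [replaceAt, this]

lemma sum_smul_alternatingWordSum_eq_zero {d m : ℕ} {α : Equiv.Perm (Fin d) → F}
    (hα : ∀ l : List (Fin d ⊕ A), IsMultilinearWord l → ∀ x, ∑ ρ, α ρ • wordEval l (x ∘ ρ) = 0)
    (a : X → A) {l : List (Fin m ⊕ A)} (hl : IsMultilinearWord l) (e : Fin d ↪o Fin m)
    (u v : Fin d → List X) (w : Fin m → List X) :
    ∑ ρ : Equiv.Perm (Fin d), α ρ • alternatingWordSum a l (replaceAt e u (v ∘ ρ) w) = 0 := by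
  simp only [alternatingWordSum, Finset.smul_sum]
  rw [Finset.sum_comm]
  refine Finset.sum_eq_zero fun σ _ => ?_
  simp only [smul_comm (α _), ← Finset.smul_sum]
  let h (i : Fin m) : List (Fin d ⊕ A) := (Function.partialInv e (σ i)).elim
    [Sum.inr ((w (σ i)).map a).prod] fun j => [Sum.inr ((u j).map a).prod, Sum.inl j]
  have hv : ∀ i j, j ∈ wordVars (h i) ↔ e j = σ i := fun i j => by
    rw [← e.injective.isPartialInv j (σ i)]
    simp only [h]
    rcases Function.partialInv e (σ i) with _ | j'
    · simp
    · simp [eq_comm]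
  have hml : IsMultilinearWord (wordSubst h l) := by
    rw [IsMultilinearWord, wordVars_subst]
    refine ⟨List.nodup_flatMap.mpr ⟨fun i _ => ?_, hl.1.imp fun {i i'} hne => ?_⟩, fun j => ?_⟩
    · simp only [h]
      rcases Function.partialInv e (σ i) with _ | j' <;> simp
    · intro j hj hj'
      rw [hv] at hj hj'
      exact hne (σ.injective (hj.symm.trans hj'))
    · exact List.mem_flatMap.mpr ⟨σ.symm (e j), hl.2 _, (hv _ _).mpr (by simp)⟩
  have h0 := hα _ hml fun j => ((v j).map a).prod
  rw [← smul_zero σ.sign, ← h0]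
  congr 1
  refine Finset.sum_congr rfl fun ρ _ => ?_
  rw [wordEval_subst]
  congr 2
  funext i
  simp only [h, replaceAt]
  rcases Function.partialInv e (σ i) with _ | j' <;> simp

lemma alternatingWordSum_eq_zero_of_eq (a : X → A) {m : ℕ} (l : List (Fin m ⊕ A))
    (w : Fin m → List X) {i j : Fin m} (hij : i ≠ j) (hw : w i = w j) :
    alternatingWordSum a l w = 0 := by
  refine Finset.sum_involution (fun σ _ => Equiv.swap i j * σ) (fun σ _ => ?_) (fun σ _ _ h => ?_)
    (fun _ _ => Finset.mem_univ _) fun σ _ => by simp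
  · have : ∀ p, w (Equiv.swap i j p) = w p := fun p => by
      rw [Equiv.swap_apply_def]
      split_ifs with h1 h2
      · rw [h1, hw]
      · rw [h2, hw]
      · rfl
    simp [this, Equiv.Perm.sign_swap hij]
  · exact hij (Equiv.swap_eq_one_iff.mp (by simpa using h))

lemma alternatingWordSum_eq_zero [Finite X] {d m : ℕ} {α : Equiv.Perm (Fin d) → F}
    (hα1 : α 1 = 1)
    (hα : ∀ l : List (Fin d ⊕ A), IsMultilinearWord l → ∀ x, ∑ ρ, α ρ • wordEval l (x ∘ ρ) = 0)
    (a : X → A) (hm : d + {w : List X | w.length < d}.ncard ≤ m)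
    {l : List (Fin m ⊕ A)} (hl : IsMultilinearWord l) (w : Fin m → List X) :
    alternatingWordSum a l w = 0 := by
  classical
  have hwf : WellFounded fun w w' : Fin m → List X =>
      toLex (fun i => (w i).length) < toLex (fun i => (w' i).length) :=
    InvImage.wf (fun w : Fin m → List X => toLex fun i => (w i).length) wellFounded_lt
  induction w using hwf.induction with
  | _ w ih =>
  by_cases hlong : d ≤ (Finset.univ.filter fun i => d ≤ (w i).length).card
  · let e := Finset.orderEmbOfCardLe _ hlong
    have he : ∀ j, d ≤ (w (e j)).length := fun j =>
      (Finset.mem_filter.mp (Finset.orderEmbOfCardLe_mem _ hlong j)).2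
    let u (j : Fin d) : List X := (w (e j)).take ((w (e j)).length - (d - j))
    let v (j : Fin d) : List X := (w (e j)).drop ((w (e j)).length - (d - j))
    have hw : replaceAt e u v w = w := by
      funext p
      by_cases hp : ∃ j, e j = p
      · obtain ⟨j, rfl⟩ := hp
        rw [replaceAt_apply]
        exact List.take_append_drop _ _
      · exact replaceAt_of_notMem e u v w (not_exists.mp hp)
    have hsum := sum_smul_alternatingWordSum_eq_zero hα a hl e u v w
    rw [← Finset.add_sum_erase _ _ (Finset.mem_univ 1), hα1, one_smul, Equiv.Perm.coe_one,
      Function.comp_id, hw] at hsum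
    rw [Finset.sum_eq_zero, add_zero] at hsum
    · exact hsum
    · intro ρ hρ
      rw [ih, smul_zero]
      have hne : ∃ j, ρ j ≠ j := by
        by_contra! h
        exact Finset.ne_of_mem_erase hρ (Equiv.ext h)
      obtain ⟨j, hj, hmin⟩ := WellFounded.has_min (wellFounded_lt (α := Fin d)) {j | ρ j ≠ j} hne
      have hfix : ∀ i < j, ρ i = i := fun i hi => by
        by_contra h
        exact hmin i h hi
      have hlt : j < ρ j := by
        refine lt_of_le_of_ne (not_lt.mp fun h => hj ?_) (Ne.symm hj)
        exact ρ.injective (hfix _ h)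
      refine ⟨e j, fun p hp => ?_, ?_⟩
      · change (replaceAt e u (v ∘ ρ) w p).length = (w p).length
        by_cases hp' : ∃ i, e i = p
        · obtain ⟨i, rfl⟩ := hp'
          rw [replaceAt_apply, Function.comp_apply, hfix i (e.lt_iff_lt.mp hp),
            ← replaceAt_apply e u v w, hw]
        · rw [replaceAt_of_notMem e u _ w (not_exists.mp hp')]
      · change (replaceAt e u (v ∘ ρ) w (e j)).length < (w (e j)).length
        rw [replaceAt_apply, Function.comp_apply, List.length_append, List.length_take,
          List.length_drop]
        have h1 := he j
        have h2 := he (ρ j)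
        have h3 := (ρ j).2
        have h4 : (j : ℕ) < ρ j := hlt
        omega
  · have hfin : {w : List X | w.length < d}.Finite := List.finite_length_lt X d
    obtain ⟨i, hi, j, hj, hij, heq⟩ := Finset.exists_ne_map_eq_of_card_lt_of_maps_to
      (s := Finset.univ.filter fun i => ¬ d ≤ (w i).length) (t := hfin.toFinset) (f := w) (by
        rw [← Set.ncard_eq_toFinset_card _ hfin]
        have := Finset.card_filter_add_card_filter_not (s := (Finset.univ : Finset (Fin m)))
          fun i => d ≤ (w i).length
        rw [Finset.card_univ, Fintype.card_fin] at this
        omega) (fun i hi => by simpa using hi)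
    exact alternatingWordSum_eq_zero_of_eq a l w hij heq

/-- A finitely generated algebra with a sparse identity satisfies a Capelli identity. -/
theorem exists_satisfiesCapelli [Finite X] {d : ℕ} {α : Equiv.Perm (Fin d) → F} (hα1 : α 1 = 1)
    (hα : ∀ l : List (Fin d ⊕ A), IsMultilinearWord l → ∀ x, ∑ ρ, α ρ • wordEval l (x ∘ ρ) = 0)
    {a : X → A} (ha : Algebra.adjoin F (Set.range a) = ⊤) : ∃ m, SatisfiesCapelli F A (Fin m) := by
  refine ⟨d + {w : List X | w.length < d}.ncard, fun l hl =>
    AlternatingMap.coe_multilinearMap_injective ?_⟩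
  refine MultilinearMap.eq_zero_of_span_eq_top (span_words_eq_top ha) fun x hx => ?_
  choose w hw using hx
  have h := alternatingWordSum_eq_zero hα1 hα a le_rfl hl w
  obtain rfl : (fun i => ((w i).map a).prod) = x := funext hw
  exact (MultilinearMap.alternatization_apply _ _).trans h

end Capelli

section Traces

variable {ι κ A B : Type*} [Ring A] [DecidableEq κ]

/-- Multiply the argument in place `p` by `a` from the left. -/
def mulAt (a : A) (p : κ) (x : κ → A) : κ → A := Function.update x p (a * x p)

lemma mulAt_comm {p q : κ} (h : p ≠ q) (a b : A) (x : κ → A) :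
    mulAt a p (mulAt b q x) = mulAt b q (mulAt a p x) := by
  simp only [mulAt, Function.update_of_ne h, Function.update_of_ne h.symm]
  exact Function.update_comm h.symm _ _ _

lemma mulAt_mulAt (p : κ) (a b : A) (x : κ → A) :
    mulAt a p (mulAt b p x) = mulAt (a * b) p x := by
  simp [mulAt, mul_assoc]

lemma mulAt_update (p : κ) (a z : A) (x : κ → A) :
    mulAt a p (Function.update x p z) = Function.update x p (a * z) := by
  simp [mulAt]

variable [Fintype ι] [DecidableEq ι] [AddCommGroup B]

/-- The trace of left multiplication by `a` over the places in the range of `e`. -/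
def traceAt (e : ι ↪ κ) (a : A) (f : (κ → A) → B) (x : κ → A) : B :=
  ∑ i, f (mulAt a (e i) x)

/-- The lists obtained from `S` by multiplying one entry by `w` from the left. -/
def leftMultiples {P : Type*} [Mul P] (w : P) : List P → List (List P)
  | [] => []
  | s :: S => (w * s :: S) :: (leftMultiples w S).map (s :: ·)

/-- Sum over the placements of the elements of `S` as left multipliers at distinct places
outside `U`. -/
def placementSum (e : ι ↪ κ) (f : (κ → A) → B) : List A → Finset ι → (κ → A) → B
  | [], _, y => f y
  | w :: S, U, y => ∑ i ∈ Uᶜ, placementSum e f S (insert i U) (mulAt w (e i) y)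

variable {e : ι ↪ κ} {f : (κ → A) → B}

lemma placementSum_perm {S T : List A} (h : S.Perm T) (U : Finset ι) (y : κ → A) :
    placementSum e f S U y = placementSum e f T U y := by
  induction h generalizing U y with
  | nil => rfl
  | cons w _ ih => exact Finset.sum_congr rfl fun i _ => ih _ _
  | trans _ _ ih ih' => rw [ih, ih']
  | swap w v S =>
    simp only [placementSum]
    rw [Finset.sum_sigma', Finset.sum_sigma']
    refine Finset.sum_bij' (fun p _ => ⟨p.2, p.1⟩) (fun p _ => ⟨p.2, p.1⟩) ?_ ?_ ?_ ?_ ?_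
    · rintro ⟨i, j⟩ h
      simp only [Finset.mem_sigma, Finset.mem_compl, Finset.mem_insert, not_or] at h ⊢
      exact ⟨h.2.2, Ne.symm h.2.1, h.1⟩
    · rintro ⟨i, j⟩ h
      simp only [Finset.mem_sigma, Finset.mem_compl, Finset.mem_insert, not_or] at h ⊢
      exact ⟨h.2.2, Ne.symm h.2.1, h.1⟩
    · exact fun _ _ => rfl
    · exact fun _ _ => rfl
    · rintro ⟨i, j⟩ h
      simp only [Finset.mem_sigma, Finset.mem_compl, Finset.mem_insert, not_or] at h
      rw [Finset.insert_comm, mulAt_comm (fun h' => h.2.1 (e.injective h'))]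

lemma placementSum_eq_zero {S : List A} {U : Finset ι} (h : Fintype.card ι < S.length + U.card)
    (y : κ → A) : placementSum e f S U y = 0 := by
  induction S generalizing U y with
  | nil => exact absurd h (not_lt.mpr (by simpa using U.card_le_univ))
  | cons w S ih =>
    refine Finset.sum_eq_zero fun i hi => ih ?_ _
    rw [Finset.card_insert_of_notMem (Finset.mem_compl.mp hi)]
    rw [List.length_cons] at h
    omega

lemma placementSum_traceAt (w : A) (S : List A) (U : Finset ι) (y : κ → A) :
    placementSum e (traceAt e w f) S U y = placementSum e f (S ++ [w]) U y +
      ((leftMultiples w S).map fun S' => placementSum e f S' U y).sum +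
      ∑ i ∈ U, placementSum e f S U (mulAt w (e i) y) := by
  induction S generalizing U y with
  | nil =>
    simp only [placementSum, traceAt, leftMultiples, List.nil_append, List.map_nil, List.sum_nil,
      add_zero]
    rw [add_comm, Finset.sum_add_sum_compl]
  | cons s S ih =>
    simp only [placementSum, leftMultiples, List.cons_append, List.map_cons, List.sum_cons,
      List.map_map, Function.comp_def, ih, Finset.sum_add_distrib]
    have h1 : ∑ j ∈ Uᶜ, ∑ i ∈ insert j U,
        placementSum e f S (insert j U) (mulAt w (e i) (mulAt s (e j) y)) =
        ∑ j ∈ Uᶜ, placementSum e f S (insert j U) (mulAt (w * s) (e j) y) +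
        ∑ i ∈ U, ∑ j ∈ Uᶜ, placementSum e f S (insert j U) (mulAt s (e j) (mulAt w (e i) y)) := by
      rw [Finset.sum_comm (s := U), ← Finset.sum_add_distrib]
      refine Finset.sum_congr rfl fun j hj => ?_
      rw [Finset.mem_compl] at hj
      rw [Finset.sum_insert hj, mulAt_mulAt]
      congr 1
      refine Finset.sum_congr rfl fun i hi => ?_
      rw [mulAt_comm fun h : e i = e j => hj (e.injective h ▸ hi)]
    have h2 : ∑ j ∈ Uᶜ, ((leftMultiples w S).map fun S' =>
        placementSum e f S' (insert j U) (mulAt s (e j) y)).sum =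
        ((leftMultiples w S).map fun S' => ∑ j ∈ Uᶜ,
          placementSum e f S' (insert j U) (mulAt s (e j) y)).sum := by
      induction leftMultiples w S with
      | nil => simp
      | cons T L ihL => simp [Finset.sum_add_distrib, ihL]
    rw [h1, h2]
    abel

end Traces

section Exchange

variable {ι κ A : Type*} [Ring A] [DecidableEq κ] [Fintype ι] [DecidableEq ι]
  {e : ι ↪ κ} {f : (κ → A) → A}

/-- Exchange an external factor `z` with the arguments, multiplying the remaining ones by the
elements of `S`. -/
def exchangeSum (e : ι ↪ κ) (S : List A) (z : A) (f : (κ → A) → A) (x : κ → A) : A :=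
  ∑ i, x (e i) * placementSum e f S {i} (Function.update x (e i) z)

lemma exchangeSum_eq_zero {S : List A} (h : Fintype.card ι ≤ S.length) (z : A) :
    exchangeSum e S z f = 0 := by
  funext x
  refine Finset.sum_eq_zero fun i _ => ?_
  rw [placementSum_eq_zero (by simpa using Nat.lt_succ_of_le h), mul_zero]

lemma exchangeSum_cons (w : A) (S : List A) (z : A) :
    exchangeSum e (w :: S) z f = exchangeSum e S z (traceAt e w f) -
      ((leftMultiples w S).map fun S' => exchangeSum e S' z f).sum - exchangeSum e S (w * z) f := by
  have h : ∀ L : List (List A), (L.map fun S' => exchangeSum e S' z f).sum = fun x =>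
      ∑ i, x (e i) * (L.map fun S' =>
        placementSum e f S' {i} (Function.update x (e i) z)).sum := by
    intro L
    induction L with
    | nil => funext x; simp
    | cons T L ih =>
      funext x
      simp [ih, mul_add, Finset.sum_add_distrib, exchangeSum]
  rw [h, eq_sub_iff_add_eq, eq_sub_iff_add_eq]
  funext x
  simp only [Pi.add_apply, exchangeSum, ← Finset.sum_add_distrib, ← mul_add]
  refine Finset.sum_congr rfl fun i _ => ?_
  rw [placementSum_traceAt, Finset.sum_singleton, mulAt_update,
    placementSum_perm (List.perm_append_singleton w S)]
  congr 1
  abel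

end Exchange

section Exchange

variable {F A ι κ : Type*} [Field F] [Ring A] [Algebra F A]

variable (F A κ) in
/-- The span of the multilinear words, as functions of their variables. -/
def multilinearFunctions : Submodule F ((κ → A) → A) :=
  Submodule.span F {f | ∃ l : List (κ ⊕ A), IsMultilinearWord l ∧ f = wordEval l}

/-- Prove closure properties of `multilinearFunctions` on words. -/
lemma multilinearFunctions_le_comap {T : ((κ → A) → A) →ₗ[F] ((ι → A) → A)}
    (hT : ∀ l : List (κ ⊕ A), IsMultilinearWord l → ∃ l' : List (ι ⊕ A), IsMultilinearWord l' ∧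
      ∀ x, T (wordEval l) x = wordEval l' x) {f : (κ → A) → A}
    (hf : f ∈ multilinearFunctions F A κ) : T f ∈ multilinearFunctions F A ι := by
  have h : multilinearFunctions F A κ ≤ (multilinearFunctions F A ι).comap T := by
    refine Submodule.span_le.mpr ?_
    rintro _ ⟨l, hl, rfl⟩
    obtain ⟨l', hl', h⟩ := hT l hl
    exact Submodule.subset_span ⟨l', hl', funext h⟩
  exact h hf

lemma comp_mulAt_mem [DecidableEq κ] {f : (κ → A) → A} (hf : f ∈ multilinearFunctions F A κ)
    (a : A) (p : κ) : (fun x => f (mulAt a p x)) ∈ multilinearFunctions F A κ := by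
  refine multilinearFunctions_le_comap (T := LinearMap.funLeft F A (mulAt a p))
    (fun l hl => ?_) hf
  let h (i : κ) : List (κ ⊕ A) := if i = p then [Sum.inr a, Sum.inl i] else [Sum.inl i]
  have hv : ∀ i, wordVars (h i) = [i] := fun i => by
    by_cases hi : i = p <;> simp [h, hi]
  refine ⟨wordSubst h l, ?_, fun x => ?_⟩
  · rw [IsMultilinearWord, wordVars_subst]
    simpa [hv, IsMultilinearWord] using hl
  · rw [wordEval_subst, LinearMap.funLeft_apply]
    congr 1
    funext i
    by_cases hi : i = p
    · subst hi
      simp [h, mulAt]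
    · simp [h, mulAt, hi]

lemma const_mul_mem {f : (κ → A) → A} (hf : f ∈ multilinearFunctions F A κ) (a : A) :
    (fun x => a * f x) ∈ multilinearFunctions F A κ := by
  refine multilinearFunctions_le_comap (T := LinearMap.compLeft (LinearMap.mulLeft F a) (κ → A))
    (fun l hl => ⟨Sum.inr a :: l, hl, fun x => ?_⟩) hf
  rw [wordEval_cons_inr]
  rfl

lemma variable_mul_mem {f : (κ → A) → A} (hf : f ∈ multilinearFunctions F A κ) :
    (fun x : Option κ → A => x none * f fun i => x (some i)) ∈
      multilinearFunctions F A (Option κ) := by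
  let T : ((κ → A) → A) →ₗ[F] ((Option κ → A) → A) :=
    { toFun := fun f x => x none * f fun i => x (some i)
      map_add' := fun f g => by funext x; exact mul_add _ _ _
      map_smul' := fun c f => by funext x; exact mul_smul_comm _ _ _ }
  refine multilinearFunctions_le_comap (T := T) (fun l hl => ?_) hf
  refine ⟨Sum.inl none :: wordSubst (fun i => [Sum.inl (some i)]) l, ?_, fun x => ?_⟩
  · rw [IsMultilinearWord, wordVars_cons_inl, wordVars_subst]
    have : ((wordVars l).flatMap fun i => wordVars [(Sum.inl (some i) : Option κ ⊕ A)]) =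
        (wordVars l).map some := by
      simp [List.map_eq_flatMap]
    rw [this]
    refine ⟨List.nodup_cons.mpr ⟨by simp, hl.1.map (Option.some_injective _)⟩, ?_⟩
    rintro (_ | i) <;> simp [hl.2]
  · rw [wordEval_cons_inl, wordEval_subst]
    simp [T]

variable [Fintype ι] [DecidableEq ι]

/-- A Capelli identity applied to a family of places of a multilinear function. -/
lemma SatisfiesCapelli.sum_viaEmbedding (hA : SatisfiesCapelli F A ι) (e : ι ↪ κ)
    {f : (κ → A) → A} (hf : f ∈ multilinearFunctions F A κ) (x : κ → A) :
    ∑ σ : Equiv.Perm ι, σ.sign • f (x ∘ σ.viaEmbedding e) = 0 := by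
  induction hf using Submodule.span_induction generalizing x with
  | zero => simp
  | add f g _ _ hf hg =>
    simp only [Pi.add_apply, smul_add, Finset.sum_add_distrib, hf, hg, add_zero]
  | smul c f _ hf =>
    simp only [Pi.smul_apply, smul_comm _ c, ← Finset.smul_sum, hf, smul_zero]
  | mem f h =>
    obtain ⟨l, hl, rfl⟩ := h
    let h (p : κ) : List (ι ⊕ A) := (Function.partialInv e p).elim [Sum.inr (x p)]
      fun i => [Sum.inl i]
    have hh : ∀ i, h (e i) = [Sum.inl i] := fun i => by
      simp [h, Function.partialInv_left e.injective]
    have hh' : ∀ p, (∀ i, e i ≠ p) → h p = [Sum.inr (x p)] := fun p hp => by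
      have : Function.partialInv e p = none := by
        rw [Option.eq_none_iff_forall_ne_some]
        exact fun i hi => hp i ((e.injective.isPartialInv i p).mp hi)
      simp [h, this]
    have hv : ∀ p i, i ∈ wordVars (h p) ↔ e i = p := fun p i => by
      by_cases hp : ∃ j, e j = p
      · obtain ⟨j, rfl⟩ := hp
        simp [hh]
      · push Not at hp
        simp [hh' p hp, hp]
    have hml : IsMultilinearWord (wordSubst h l) := by
      rw [IsMultilinearWord, wordVars_subst]
      refine ⟨List.nodup_flatMap.mpr ⟨fun p _ => ?_, hl.1.imp fun {p q} hne => ?_⟩, fun i => ?_⟩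
      · simp only [h]
        rcases Function.partialInv e p with _ | i <;> simp
      · intro i hi hi'
        rw [hv] at hi hi'
        exact hne (hi.symm.trans hi')
      · exact List.mem_flatMap.mpr ⟨e i, hl.2 _, (hv _ _).mpr rfl⟩
    rw [← satisfiesCapelli_iff.mp hA _ hml fun i => x (e i)]
    refine Finset.sum_congr rfl fun σ _ => ?_
    rw [wordEval_subst]
    congr 2
    funext p
    by_cases hp : ∃ j, e j = p
    · obtain ⟨j, rfl⟩ := hp
      simp [hh, Equiv.Perm.viaEmbedding_apply]
    · push Not at hp
      simp [hh' p hp, Equiv.Perm.viaEmbedding_apply_of_notMem _ _ p (by simpa using hp)]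

variable [CharZero F] [DecidableEq κ]

/-- The exchange formula: a function alternating in the places `e (some i)` is the sum of its
values with the place `e none` exchanged with each of these. -/
lemma SatisfiesCapelli.exchange (hA : SatisfiesCapelli F A (Option ι)) (e : Option ι ↪ κ)
    {f : (κ → A) → A} (hf : f ∈ multilinearFunctions F A κ)
    (halt : ∀ (τ : Equiv.Perm ι) (x : κ → A),
      f (x ∘ Equiv.Perm.viaEmbedding (Equiv.optionCongr τ) e) = τ.sign • f x)
    (x : κ → A) : f x = ∑ i, f (x ∘ Equiv.swap (e none) (e (some i))) := by
  have h := hA.sum_viaEmbedding e hf x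
  rw [← Equiv.sum_comp Equiv.Perm.decomposeOption.symm, Fintype.sum_prod_type] at h
  have hterm : ∀ (o : Option ι) (τ : Equiv.Perm ι),
      (Equiv.Perm.decomposeOption.symm (o, τ)).sign •
        f (x ∘ (Equiv.Perm.decomposeOption.symm (o, τ)).viaEmbedding e) =
      (Equiv.swap none o).sign • f (x ∘ Equiv.swap (e none) (e o)) := by
    intro o τ
    have hs : (Equiv.swap none o).viaEmbedding e = Equiv.swap (e none) (e o) := by
      ext p
      by_cases hp : ∃ j, e j = p
      · obtain ⟨j, rfl⟩ := hp
        rw [Equiv.Perm.viaEmbedding_apply, e.injective.swap_apply]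
      · push Not at hp
        rw [Equiv.Perm.viaEmbedding_apply_of_notMem _ _ p (by simpa using hp),
          Equiv.swap_apply_of_ne_of_ne (hp _).symm (hp _).symm]
    have hm : Equiv.Perm.viaEmbedding (Equiv.swap none o * Equiv.optionCongr τ) e =
        Equiv.swap (e none) (e o) * Equiv.Perm.viaEmbedding (Equiv.optionCongr τ) e := by
      rw [← hs]
      exact map_mul (Equiv.Perm.viaEmbeddingHom e) _ _
    rw [Equiv.Perm.decomposeOption_symm_apply, hm, Equiv.Perm.coe_mul, ← Function.comp_assoc, halt,
      Equiv.Perm.sign_mul, Equiv.optionCongr_sign, smul_smul, mul_assoc, Int.units_mul_self,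
      mul_one]
  simp only [hterm, Finset.sum_const, Finset.card_univ, ← Finset.smul_sum] at h
  rw [← Nat.cast_smul_eq_nsmul F, smul_eq_zero_iff_right
    (Nat.cast_ne_zero.mpr Fintype.card_ne_zero), Fintype.sum_option] at h
  simp only [Equiv.swap_self, Equiv.Perm.sign_refl, one_smul, Equiv.coe_refl, Function.comp_id,
    Equiv.Perm.sign_swap (Option.some_ne_none _).symm, Units.neg_smul, Finset.sum_neg_distrib] at h
  exact eq_of_sub_eq_zero (by rw [sub_eq_add_neg]; exact h)

end Exchange

section DoublyAlternating

variable {F A ι : Type*} [Field F] [Ring A] [Algebra F A] [Fintype ι] [DecidableEq ι]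

variable (F A ι) in
/-- The multilinear functions alternating in each of two sets of variables. -/
def doublyAlternating : Submodule F ((ι ⊕ ι → A) → A) where
  carrier := {f | f ∈ multilinearFunctions F A (ι ⊕ ι) ∧ ∀ (τ : Equiv.Perm ι) (x : ι ⊕ ι → A),
    f (x ∘ Equiv.sumCongr τ (Equiv.refl ι)) = τ.sign • f x ∧
    f (x ∘ Equiv.sumCongr (Equiv.refl ι) τ) = τ.sign • f x}
  add_mem' := fun hf hg => ⟨Submodule.add_mem _ hf.1 hg.1, fun τ x =>
    ⟨by simp only [Pi.add_apply, smul_add, (hf.2 τ x).1, (hg.2 τ x).1],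
      by simp only [Pi.add_apply, smul_add, (hf.2 τ x).2, (hg.2 τ x).2]⟩⟩
  zero_mem' := ⟨Submodule.zero_mem _, fun τ x => by simp⟩
  smul_mem' := fun c f hf => ⟨Submodule.smul_mem _ c hf.1, fun τ x =>
    ⟨by simp only [Pi.smul_apply, smul_comm _ c, (hf.2 τ x).1],
      by simp only [Pi.smul_apply, smul_comm _ c, (hf.2 τ x).2]⟩⟩

lemma mulAt_comp_perm {κ : Type*} [DecidableEq κ] (a : A) (p : κ) (σ : Equiv.Perm κ) (x : κ → A) :
    mulAt a p x ∘ σ = mulAt a (σ.symm p) (x ∘ σ) := by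
  rw [mulAt, Function.update_comp_equiv, mulAt, Function.comp_apply, Equiv.apply_symm_apply]

lemma mul_mem_doublyAlternating (a : A) {f : (ι ⊕ ι → A) → A}
    (hf : f ∈ doublyAlternating F A ι) : (fun x => a * f x) ∈ doublyAlternating F A ι :=
  ⟨const_mul_mem hf.1 a, fun τ x =>
    ⟨by simp only [(hf.2 τ x).1, mul_smul_comm], by simp only [(hf.2 τ x).2, mul_smul_comm]⟩⟩

lemma traceAt_mem_doublyAlternating (a : A) {f : (ι ⊕ ι → A) → A}
    (hf : f ∈ doublyAlternating F A ι) :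
    traceAt Function.Embedding.inl a f ∈ doublyAlternating F A ι := by
  refine ⟨?_, fun τ x => ⟨?_, ?_⟩⟩
  · have h : traceAt Function.Embedding.inl a f =
        ∑ i : ι, fun x => f (mulAt a (Sum.inl i) x) := by
      funext x
      rw [Finset.sum_apply]
      rfl
    rw [h]
    exact Submodule.sum_mem _ fun i _ => comp_mulAt_mem hf.1 a _
  · simp only [traceAt, Finset.smul_sum, Function.Embedding.inl_apply]
    rw [← Equiv.sum_comp τ.symm]
    exact Finset.sum_congr rfl fun i _ => by
      rw [← (hf.2 τ _).1, mulAt_comp_perm]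
      simp
  · simp only [traceAt, Finset.smul_sum, Function.Embedding.inl_apply]
    exact Finset.sum_congr rfl fun i _ => by
      rw [← (hf.2 τ _).2, mulAt_comp_perm]
      simp

variable [CharZero F] {f : (ι ⊕ ι → A) → A}

/-- The embedding prepending the place `p` to the places in the range of `e`. -/
def Function.Embedding.option {κ : Type*} (e : ι ↪ κ) (p : κ) (hp : ∀ i, e i ≠ p) :
    Option ι ↪ κ where
  toFun o := o.elim p e
  inj' := by
    rintro (_ | i) (_ | j) h
    · rfl
    · exact absurd h.symm (hp j)
    · exact absurd h (hp i)
    · exact congrArg some (e.injective h)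

lemma exchange_inr (hA : SatisfiesCapelli F A (Option ι)) (hf : f ∈ doublyAlternating F A ι)
    (j : ι) (x : ι ⊕ ι → A) :
    f x = ∑ i, f (x ∘ Equiv.swap (Sum.inr j) (Sum.inl i)) := by
  let e : Option ι ↪ ι ⊕ ι := Function.Embedding.inl.option (Sum.inr j) fun i => by simp
  refine hA.exchange e hf.1 (fun τ x => ?_) x
  rw [← (hf.2 τ x).1]
  congr 2
  funext p
  rcases p with i | i
  · exact Equiv.Perm.viaEmbedding_apply _ e (some i)
  · by_cases hi : i = j
    · subst hi
      exact Equiv.Perm.viaEmbedding_apply _ e none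
    · refine Equiv.Perm.viaEmbedding_apply_of_notMem _ e _ ?_
      rintro ⟨_ | k, hk⟩
      · exact hi (Sum.inr.inj hk).symm
      · exact Sum.inl_ne_inr hk

lemma exchange_inl (hA : SatisfiesCapelli F A (Option ι)) (hf : f ∈ doublyAlternating F A ι)
    (i : ι) (x : ι ⊕ ι → A) :
    f x = ∑ j, f (x ∘ Equiv.swap (Sum.inl i) (Sum.inr j)) := by
  let e : Option ι ↪ ι ⊕ ι := Function.Embedding.inr.option (Sum.inl i) fun i => by simp
  refine hA.exchange e hf.1 (fun τ x => ?_) x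
  rw [← (hf.2 τ x).2]
  congr 2
  funext p
  rcases p with j | j
  · by_cases hj : j = i
    · subst hj
      exact Equiv.Perm.viaEmbedding_apply _ e none
    · refine Equiv.Perm.viaEmbedding_apply_of_notMem _ e _ ?_
      rintro ⟨_ | k, hk⟩
      · exact hj (Sum.inl.inj hk).symm
      · exact Sum.inr_ne_inl hk
  · exact Equiv.Perm.viaEmbedding_apply _ e (some j)

lemma exchangeSum_nil (hA : SatisfiesCapelli F A (Option ι)) (hf : f ∈ doublyAlternating F A ι)
    (z : A) (x : ι ⊕ ι → A) : exchangeSum Function.Embedding.inl [] z f x = z * f x := by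
  let e : Option ι ↪ Option (ι ⊕ ι) :=
    (Function.Embedding.inl.trans Function.Embedding.some).option none fun i => by simp
  have h := hA.exchange e (variable_mul_mem hf.1) (fun τ x => ?_) fun o => o.elim z x
  · simp only [exchangeSum, placementSum]
    refine (h.trans (Finset.sum_congr rfl fun i _ => ?_)).symm
    have h1 : (fun p => ((fun o : Option (ι ⊕ ι) => o.elim z x) ∘
        Equiv.swap (e none) (e (some i))) (some p)) = Function.update x (Sum.inl i) z := by
      funext p
      by_cases hp : p = Sum.inl i
      · subst hp
        rw [Function.update_self]
        exact congrArg (fun o : Option (ι ⊕ ι) => o.elim z x) (Equiv.swap_apply_right _ _)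
      · rw [Function.update_of_ne hp]
        refine congrArg (fun o : Option (ι ⊕ ι) => o.elim z x)
          (Equiv.swap_apply_of_ne_of_ne (Option.some_ne_none _) fun h => hp (Option.some_inj.mp h))
    rw [h1]
    congr 1
  · have h1 : (fun p => (x ∘ Equiv.Perm.viaEmbedding (Equiv.optionCongr τ) e) (some p)) =
        (fun p => x (some p)) ∘ Equiv.sumCongr τ (Equiv.refl ι) := by
      funext p
      rcases p with i | i
      · exact congrArg x (Equiv.Perm.viaEmbedding_apply _ e (some i))
      · refine congrArg x (Equiv.Perm.viaEmbedding_apply_of_notMem _ e _ ?_)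
        rintro ⟨_ | k, hk⟩
        · exact Option.some_ne_none _ hk.symm
        · exact Sum.inl_ne_inr (Option.some_inj.mp hk)
    rw [h1, (hf.2 τ _).1, mul_smul_comm]
    congr 2
    exact congrArg x (Equiv.Perm.viaEmbedding_apply _ e none)

/-- The traces over the two sets of alternating variables agree. -/
lemma traceAt_inl_eq_traceAt_inr (hA : SatisfiesCapelli F A (Option ι))
    (hf : f ∈ doublyAlternating F A ι) (a : A) :
    traceAt Function.Embedding.inl a f = traceAt Function.Embedding.inr a f := by
  funext x
  let s (i j : ι) : Equiv.Perm (ι ⊕ ι) := Equiv.swap (Sum.inr j) (Sum.inl i)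
  let D (i : ι) (x : ι ⊕ ι → A) : A := f (mulAt a (Sum.inl i) x)
  let C (i j : ι) : A := ∑ k ∈ Finset.univ.erase i, D i (x ∘ s k j)
  have hr : ∀ j, f (mulAt a (Sum.inr j) x) = ∑ i, D i (x ∘ s i j) := fun j => by
    rw [exchange_inr hA hf j]
    refine Finset.sum_congr rfl fun i _ => ?_
    rw [mulAt_comp_perm, Equiv.symm_swap, Equiv.swap_apply_left]
  have hl : ∀ i j, D i x = f (mulAt a (Sum.inr j) (x ∘ s i j)) + C i j := fun i j => by
    change f _ = _
    rw [exchange_inr hA hf j, ← Finset.add_sum_erase _ _ (Finset.mem_univ i)]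
    rw [mulAt_comp_perm, Equiv.symm_swap, Equiv.swap_apply_right]
    congr 1
    refine Finset.sum_congr rfl fun k hk => ?_
    rw [mulAt_comp_perm, Equiv.symm_swap, Equiv.swap_apply_of_ne_of_ne (by simp)]
    exact fun h => Finset.ne_of_mem_erase hk (Sum.inl.inj h).symm
  have hl' : ∀ i, D i x = ∑ j, f (mulAt a (Sum.inr j) (x ∘ s i j)) := fun i => by
    change f _ = _
    rw [exchange_inl hA hf i]
    refine Finset.sum_congr rfl fun j _ => ?_
    rw [mulAt_comp_perm, Equiv.symm_swap, Equiv.swap_apply_left, Equiv.swap_comm]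
  have ht : ∀ j, traceAt Function.Embedding.inl a f x =
      ∑ i, D i (x ∘ s i j) + ∑ i, C i j := fun j => by
    rw [exchange_inr hA (traceAt_mem_doublyAlternating a hf) j, ← Finset.sum_add_distrib]
    change ∑ k, ∑ i, D i (x ∘ s k j) = _
    rw [Finset.sum_comm]
    exact Finset.sum_congr rfl fun i _ => (Finset.add_sum_erase _ _ (Finset.mem_univ i)).symm
  have h1 : ∑ _j : ι, traceAt Function.Embedding.inl a f x =
      traceAt Function.Embedding.inr a f x + ∑ j, ∑ i, C i j := by
    rw [Finset.sum_congr rfl fun j _ => ht j, Finset.sum_add_distrib]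
    congr 1
    exact Finset.sum_congr rfl fun j _ => (hr j).symm
  have h2 : ∑ _j : ι, traceAt Function.Embedding.inl a f x =
      traceAt Function.Embedding.inl a f x + ∑ j, ∑ i, C i j := by
    have h3 : ∀ j, traceAt Function.Embedding.inl a f x =
        ∑ i, f (mulAt a (Sum.inr j) (x ∘ s i j)) + ∑ i, C i j := fun j => by
      rw [← Finset.sum_add_distrib]
      exact Finset.sum_congr rfl fun i _ => hl i j
    rw [Finset.sum_congr rfl fun j _ => h3 j, Finset.sum_add_distrib]
    congr 1
    rw [Finset.sum_comm]
    exact Finset.sum_congr rfl fun i _ => (hl' i).symm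
  exact add_right_cancel (h2.symm.trans h1)

/-- The traces commute. -/
lemma traceAt_comm (hA : SatisfiesCapelli F A (Option ι)) (hf : f ∈ doublyAlternating F A ι)
    (a b : A) : traceAt Function.Embedding.inl a (traceAt Function.Embedding.inl b f) =
      traceAt Function.Embedding.inl b (traceAt Function.Embedding.inl a f) := by
  rw [traceAt_inl_eq_traceAt_inr hA hf b,
    traceAt_inl_eq_traceAt_inr hA (traceAt_mem_doublyAlternating a hf) b]
  funext x
  simp only [traceAt]
  rw [Finset.sum_comm]
  refine Finset.sum_congr rfl fun i _ => Finset.sum_congr rfl fun j _ => ?_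
  rw [mulAt_comm (by simp)]

end DoublyAlternating

section ExchangeLead

lemma leftMultiples_append {P : Type*} [Mul P] (w : P) (S T : List P) :
    leftMultiples w (S ++ T) =
      (leftMultiples w S).map (· ++ T) ++ (leftMultiples w T).map (S ++ ·) := by
  induction S with
  | nil => simp [leftMultiples]
  | cons s S ih => simp [leftMultiples, ih, Function.comp_def]

lemma leftMultiples_map {P Q : Type*} [Mul P] [Mul Q] {φ : P → Q}
    (hφ : ∀ a b, φ (a * b) = φ a * φ b) (w : P) (S : List P) :
    leftMultiples (φ w) (S.map φ) = (leftMultiples w S).map (List.map φ) := by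
  induction S with
  | nil => simp [leftMultiples]
  | cons s S ih => simp [leftMultiples, ih, hφ, Function.comp_def]

lemma length_leftMultiples {P : Type*} [Mul P] (w : P) (S : List P) :
    (leftMultiples w S).length = S.length := by
  induction S with
  | nil => simp [leftMultiples]
  | cons s S ih => simp [leftMultiples, ih]

lemma length_of_mem_leftMultiples {P : Type*} [Mul P] {w : P} {S S' : List P}
    (h : S' ∈ leftMultiples w S) : S'.length = S.length := by
  induction S generalizing S' with
  | nil => simp [leftMultiples] at h
  | cons s S ih =>
    obtain rfl | ⟨T, hT, rfl⟩ := by simpa [leftMultiples] using h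
    · simp
    · simp [ih hT]

lemma sum_map_of_mem_leftMultiples {P M : Type*} [Mul P] [AddCommMonoid M] {δ : P → M}
    (hδ : ∀ a b, δ (a * b) = δ a + δ b) {w : P} {S S' : List P}
    (h : S' ∈ leftMultiples w S) : (S'.map δ).sum = δ w + (S.map δ).sum := by
  induction S generalizing S' with
  | nil => simp [leftMultiples] at h
  | cons s S ih =>
    obtain rfl | ⟨T, hT, rfl⟩ := by simpa [leftMultiples] using h
    · simp [hδ, add_assoc]
    · simp [ih hT, add_left_comm]

lemma forall_mem_of_mem_leftMultiples {P : Type*} [Mul P] {p : P → Prop} {w : P}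
    (hw : ∀ s, p s → p (w * s)) {S S' : List P} (hS : ∀ s ∈ S, p s)
    (h : S' ∈ leftMultiples w S) : ∀ s ∈ S', p s := by
  induction S generalizing S' with
  | nil => simp [leftMultiples] at h
  | cons s S ih =>
    simp only [List.forall_mem_cons] at hS
    obtain rfl | ⟨T, hT, rfl⟩ := by simpa [leftMultiples] using h
    · simpa using ⟨hw s hS.1, hS.2⟩
    · simpa using ⟨hS.1, ih hS.2 hT⟩

/-- The part of the exchange recursion without traces. -/
def exchangeLead {R : Type*} [Ring R] : ℕ → List R → R → R
  | 0, [], z => z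
  | 0, _ :: _, _ => 0
  | _ + 1, [], _ => 0
  | k + 1, w :: S, z =>
    -((leftMultiples w S).map fun S' => exchangeLead k S' z).sum - exchangeLead k S (w * z)

lemma map_exchangeLead {R R' : Type*} [Ring R] [Ring R'] (φ : R →+* R') (k : ℕ) (S : List R)
    (z : R) : φ (exchangeLead k S z) = exchangeLead k (S.map φ) (φ z) := by
  induction k generalizing S z with
  | zero => cases S <;> simp [exchangeLead]
  | succ k ih =>
    cases S with
    | nil => simp [exchangeLead]
    | cons w S =>
      simp only [exchangeLead, List.map_cons, leftMultiples_map (map_mul φ), map_sub, map_neg,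
        map_list_sum, ih, map_mul, List.map_map, Function.comp_def]

lemma exchangeLead_map_commMonoid {P R : Type*} [CommMonoid P] [Ring R] (φ : P →* R) (S : List P)
    (z : P) (k : ℕ) (hk : S.length = k) :
    exchangeLead k (S.map φ) (φ z) = ((-1) ^ k * (k.factorial : ℤ)) • φ (S.prod * z) := by
  induction k generalizing S z with
  | zero =>
    obtain rfl := List.length_eq_zero_iff.mp hk
    simp [exchangeLead]
  | succ k ih =>
    obtain ⟨w, S, rfl⟩ := List.exists_cons_of_length_eq_add_one hk
    have hk : S.length = k := by simpa using hk
    rw [List.map_cons, exchangeLead, leftMultiples_map (map_mul φ), List.map_map, ← map_mul,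
      ih _ _ hk]
    have h : (leftMultiples w S).map ((fun S' => exchangeLead k S' (φ z)) ∘ List.map φ) =
        List.replicate k (((-1) ^ k * (k.factorial : ℤ)) • φ ((w :: S).prod * z)) := by
      rw [List.eq_replicate_iff]
      refine ⟨by simp [length_leftMultiples, hk], ?_⟩
      simp only [List.mem_map, Function.comp_apply]
      rintro _ ⟨T, hT, rfl⟩
      rw [ih _ _ ((length_of_mem_leftMultiples hT).trans hk)]
      congr 3
      have := sum_map_of_mem_leftMultiples (δ := Additive.ofMul) (fun _ _ => rfl) hT
      rw [List.prod_cons]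
      have h2 := congrArg Additive.toMul this
      simpa [Function.comp_def] using h2
    rw [h, List.sum_replicate, List.prod_cons, mul_left_comm S.prod w z, mul_assoc w S.prod z,
      ← natCast_zsmul, smul_smul, ← neg_smul, ← sub_smul]
    congr 1
    rw [Nat.factorial_succ]
    push_cast
    ring

variable {F R B : Type*} [Field F] [Ring R] [Algebra F R] [AddCommGroup B] [Module F B]

variable (F) in
/-- Linearity in every entry of a list. -/
def IsSlotLinear (g : List R → B) : Prop :=
  ∀ (S T : List R) (p q : R) (c : F),
    g (S ++ (p + c • q) :: T) = g (S ++ p :: T) + c • g (S ++ q :: T)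

lemma List.sum_map_add_smul {ι : Type*} (l : List ι) (u v : ι → B) (c : F) :
    (l.map fun i => u i + c • v i).sum = (l.map u).sum + c • (l.map v).sum := by
  rw [List.sum_map_add, List.smul_sum, List.map_map]
  rfl

lemma IsSlotLinear.sum_leftMultiples_left {g : List R → B} (hg : IsSlotLinear F g) (w v : R)
    (c : F) (S : List R) : ((leftMultiples (w + c • v) S).map g).sum =
      ((leftMultiples w S).map g).sum + c • ((leftMultiples v S).map g).sum := by
  induction S generalizing g with
  | nil => simp [leftMultiples]
  | cons s S ih =>
    have h := ih (g := fun S => g (s :: S)) fun S T p q c => hg (s :: S) T p q c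
    have h' := hg [] S (w * s) (v * s) c
    simp only [List.nil_append] at h'
    simp only [leftMultiples, List.map_cons, List.sum_cons, List.map_map, Function.comp_def, h,
      add_mul, smul_mul_assoc, h', smul_add]
    abel

lemma IsSlotLinear.sum_leftMultiples {g : List R → B} (hg : IsSlotLinear F g) (w : R) :
    IsSlotLinear F fun S => ((leftMultiples w S).map g).sum := by
  intro S T p q c
  have h1 : ∀ U, g ((U ++ (p + c • q) :: T)) = g (U ++ p :: T) + c • g (U ++ q :: T) :=
    fun U => hg U T p q c
  have h2 : ∀ U, g ((S ++ (p + c • q) :: U)) = g (S ++ p :: U) + c • g (S ++ q :: U) :=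
    fun U => hg S U p q c
  have h3 := hg S T (w * p) (w * q) c
  simp only [leftMultiples_append, leftMultiples, List.map_cons, List.map_append, List.sum_append,
    List.sum_cons, List.map_map, Function.comp_def, h1, h2, List.sum_map_add_smul, mul_add,
    mul_smul_comm, h3, smul_add]
  abel

lemma exchangeLead_add_smul (k : ℕ) (S : List R) (z z' : R) (c : F) :
    exchangeLead k S (z + c • z') = exchangeLead k S z + c • exchangeLead k S z' := by
  induction k generalizing S z z' with
  | zero => cases S <;> simp [exchangeLead]
  | succ k ih =>
    cases S with
    | nil => simp [exchangeLead]
    | cons w S =>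
      have h := List.sum_map_add_smul (leftMultiples w S) (exchangeLead k · z)
        (exchangeLead k · z') c
      simp only [exchangeLead, mul_add, mul_smul_comm, ih, h, smul_sub, smul_neg]
      abel

lemma isSlotLinear_exchangeLead (k : ℕ) (z : R) :
    IsSlotLinear F fun S => exchangeLead k S z := by
  induction k generalizing z with
  | zero => rintro (_ | _) T p q c <;> simp [exchangeLead]
  | succ k ih =>
    rintro (_ | ⟨w, S⟩) T p q c
    · simp only [List.nil_append, exchangeLead, (ih z).sum_leftMultiples_left, add_mul,
        smul_mul_assoc, exchangeLead_add_smul, smul_sub, smul_neg]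
      abel
    · have h1 := (ih z).sum_leftMultiples w S T p q c
      have h2 := ih (w * z) S T p q c
      simp only at h1 h2
      simp only [List.cons_append, exchangeLead, h1, h2, smul_sub, smul_neg]
      abel

/-- A multilinear function on lists takes values in a submodule if it does so on lists from a
spanning set. -/
lemma IsSlotLinear.mem_of_forall_mem_span {g : List R → B} (hg : IsSlotLinear F g)
    {J : Submodule F B} {T : Set R} {n : ℕ}
    (h : ∀ S : List R, S.length = n → (∀ s ∈ S, s ∈ T) → g S ∈ J) (S : List R) (hn : S.length = n)
    (hS : ∀ s ∈ S, s ∈ Submodule.span F T) : g S ∈ J := by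
  suffices H : ∀ S₁ : List R, (∀ s ∈ S₁, s ∈ T) → S₁.length + S.length = n → g (S₁ ++ S) ∈ J by
    simpa using H [] (by simp) (by simpa using hn)
  clear hn
  induction S with
  | nil => exact fun S₁ h₁ hl => by simpa using h S₁ (by simpa using hl) h₁
  | cons s S ih =>
    intro S₁ h₁ hl
    simp only [List.forall_mem_cons] at hS
    have hadd : ∀ p q, g (S₁ ++ (p + q) :: S) = g (S₁ ++ p :: S) + g (S₁ ++ q :: S) := fun p q => by
      simpa using hg S₁ S p q 1
    have hz : g (S₁ ++ 0 :: S) = 0 := by simpa using hadd 0 0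
    obtain ⟨hs, hS⟩ := hS
    induction hs using Submodule.span_induction with
    | mem s hs =>
      have := ih hS (S₁ ++ [s]) (by simpa [or_imp, forall_and] using ⟨h₁, hs⟩)
        (by simpa [add_assoc, add_comm 1] using hl)
      simpa using this
    | zero => simp [hz]
    | add p q _ _ hp hq =>
      rw [hadd]
      exact add_mem (hp (by simpa using hl)) (hq (by simpa using hl))
    | smul c p _ hp =>
      have := hg S₁ S 0 p c
      rw [zero_add, hz, zero_add] at this
      rw [this]
      exact J.smul_mem c (hp (by simpa using hl))

end ExchangeLead

section WordSpan

variable {K E X : Type*} [CommRing K] [Ring E] [Algebra K E]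

variable (K) in
/-- The span of the values of the words of length less than `ℓ`. -/
def wordSpan (Λ : FreeMonoid X →* E) (ℓ : ℕ) : Submodule K E :=
  Submodule.span K (Λ '' {u | u.length < ℓ})

lemma mem_wordSpan {Λ : FreeMonoid X →* E} {ℓ : ℕ} {u : FreeMonoid X} (h : u.length < ℓ) :
    Λ u ∈ wordSpan K Λ ℓ :=
  Submodule.subset_span ⟨u, h, rfl⟩

lemma wordSpan_mono {Λ : FreeMonoid X →* E} {k ℓ : ℕ} (h : k ≤ ℓ) :
    wordSpan K Λ k ≤ wordSpan K Λ ℓ :=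
  Submodule.span_mono (Set.image_mono fun _ hu => lt_of_lt_of_le hu h)

lemma mul_mem_wordSpan {Λ : FreeMonoid X →* E} (u : FreeMonoid X) {ℓ : ℕ} {v : E}
    (hv : v ∈ wordSpan K Λ ℓ) : Λ u * v ∈ wordSpan K Λ (u.length + ℓ) := by
  induction hv using Submodule.span_induction with
  | mem v hv =>
    obtain ⟨w, hw, rfl⟩ := hv
    rw [← map_mul]
    exact mem_wordSpan (by rw [FreeMonoid.length_mul]; exact Nat.add_lt_add_left hw _)
  | zero => simp
  | add v w _ _ hv hw => rw [mul_add]; exact add_mem hv hw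
  | smul c v _ hv => rw [mul_smul_comm]; exact Submodule.smul_mem _ c hv

lemma wordSpan_mul_mem {Λ : FreeMonoid X →* E} (u : FreeMonoid X) {ℓ : ℕ} {v : E}
    (hv : v ∈ wordSpan K Λ ℓ) : v * Λ u ∈ wordSpan K Λ (ℓ + u.length) := by
  induction hv using Submodule.span_induction with
  | mem v hv =>
    obtain ⟨w, hw, rfl⟩ := hv
    rw [← map_mul]
    exact mem_wordSpan (by rw [FreeMonoid.length_mul]; exact Nat.add_lt_add_right hw _)
  | zero => simp
  | add v w _ _ hv hw => rw [add_mul]; exact add_mem hv hw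
  | smul c v _ hv => rw [smul_mul_assoc]; exact Submodule.smul_mem _ c hv

lemma exchangeLead_mem_wordSpan (Λ : FreeMonoid X →* E) (k : ℕ) (S : List (FreeMonoid X))
    (z : FreeMonoid X) : exchangeLead k (S.map Λ) (Λ z) ∈
      wordSpan K Λ ((S.map FreeMonoid.length).sum + z.length + 1) := by
  induction k generalizing S z with
  | zero =>
    cases S with
    | nil => exact mem_wordSpan (by simp)
    | cons w S => simp [exchangeLead]
  | succ k ih =>
    cases S with
    | nil => simp [exchangeLead]
    | cons w S =>
      rw [List.map_cons (f := Λ), exchangeLead, leftMultiples_map (map_mul Λ), ← map_mul]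
      refine sub_mem (neg_mem (list_sum_mem ?_)) ?_
      · simp only [List.mem_map, List.map_map]
        rintro _ ⟨T, hT, rfl⟩
        have := sum_map_of_mem_leftMultiples (δ := FreeMonoid.length) FreeMonoid.length_mul hT
        rw [List.map_cons, List.sum_cons, ← this]
        exact ih T z
      · convert ih S (w * z) using 2
        simp only [List.map_cons, List.sum_cons, FreeMonoid.length_mul]
        ring

/-- The homomorphism recording the length of a word as a degree. -/
noncomputable def lengthMonomial (Λ : FreeMonoid X →* E) : FreeMonoid X →* Polynomial E where
  toFun u := Polynomial.monomial u.length (Λ u)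
  map_one' := by simp
  map_mul' u v := by simp [Polynomial.monomial_mul_monomial, FreeMonoid.length_mul]

lemma exchangeLead_lengthMonomial (Λ : FreeMonoid X →* E) (k : ℕ) (S : List (FreeMonoid X))
    (z : FreeMonoid X) : exchangeLead k (S.map (lengthMonomial Λ)) (lengthMonomial Λ z) =
      Polynomial.monomial ((S.map FreeMonoid.length).sum + z.length)
        (exchangeLead k (S.map Λ) (Λ z)) := by
  induction k generalizing S z with
  | zero => cases S <;> simp [exchangeLead, lengthMonomial]
  | succ k ih =>
    cases S with
    | nil => simp [exchangeLead]
    | cons w S =>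
      have h1 : ∀ T ∈ leftMultiples w S,
          exchangeLead k (T.map (lengthMonomial Λ)) (lengthMonomial Λ z) =
          Polynomial.monomial (((w :: S).map FreeMonoid.length).sum + z.length)
            (exchangeLead k (T.map Λ) (Λ z)) := fun T hT => by
        have := sum_map_of_mem_leftMultiples (δ := FreeMonoid.length) FreeMonoid.length_mul hT
        rw [ih, this, List.map_cons, List.sum_cons]
      have h2 : (S.map FreeMonoid.length).sum + (w * z).length =
          ((w :: S).map FreeMonoid.length).sum + z.length := by
        simp only [List.map_cons, List.sum_cons, FreeMonoid.length_mul]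
        ring
      rw [List.map_cons, exchangeLead, leftMultiples_map (map_mul (lengthMonomial Λ)), ← map_mul,
        ih, h2, List.map_map, Function.comp_def, List.map_congr_left h1, List.map_cons (f := Λ),
        exchangeLead, leftMultiples_map (map_mul Λ), ← map_mul, map_sub, map_neg, map_list_sum,
        List.map_map, List.map_map]
      rfl

variable {F : Type*} [Field F] [Algebra F K] [Algebra F E] [IsScalarTower F K E]

/-- If the leading parts of the exchange recursion are combinations of shorter words, then so
are the long words. -/
lemma exists_mem_wordSpan_length [CharZero F] {Λ : FreeMonoid X →* E} {n : ℕ}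
    (h : ∀ S : List (FreeMonoid X), S.length = n → (∀ u ∈ S, u ≠ 1) →
      exchangeLead n (S.map Λ) 1 ∈ wordSpan K Λ (S.map FreeMonoid.length).sum) :
    ∃ N, ∀ u : FreeMonoid X, N ≤ u.length → Λ u ∈ wordSpan K Λ u.length := by
  let ψ : FreeMonoid X →* FreeAlgebra F X := FreeMonoid.lift (FreeAlgebra.ι F)
  let Lt : FreeAlgebra F X →ₐ[F] Polynomial E :=
    FreeAlgebra.lift F fun x => lengthMonomial Λ (FreeMonoid.of x)
  have hLψ : ∀ u, Lt (ψ u) = lengthMonomial Λ u := fun u => by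
    refine DFunLike.congr_fun (f := (Lt : FreeAlgebra F X →* Polynomial E).comp ψ) ?_ u
    refine FreeMonoid.hom_eq fun x => ?_
    simp [Lt, ψ]
  let J : Submodule F (FreeAlgebra F X) :=
    { carrier := {p | ∀ ℓ, (Lt p).coeff ℓ ∈ wordSpan K Λ ℓ}
      zero_mem' := fun ℓ => by simp
      add_mem' := fun hp hq ℓ => by
        rw [map_add, Polynomial.coeff_add]; exact add_mem (hp ℓ) (hq ℓ)
      smul_mem' := fun c p hp ℓ => by
        rw [map_smul, Polynomial.coeff_smul]
        exact Submodule.smul_of_tower_mem _ c (hp ℓ) }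
  let S : Submodule F (FreeAlgebra F X) := Submodule.span F (ψ '' {u | u ≠ 1})
  have hSl : ∀ a, ∀ s ∈ S, a * s ∈ S := by
    intro a
    induction a using FreeAlgebra.induction with
    | grade0 r => exact fun s hs => by rw [← Algebra.smul_def]; exact S.smul_mem r hs
    | grade1 x =>
      intro s hs
      induction hs using Submodule.span_induction with
      | mem s hs =>
        obtain ⟨u, hu, rfl⟩ := hs
        refine Submodule.subset_span ⟨FreeMonoid.of x * u, ?_, by simp [ψ]⟩
        exact fun h => by simpa [FreeMonoid.length_mul] using congrArg FreeMonoid.length h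
      | zero => simp
      | add v w _ _ hv hw => rw [mul_add]; exact add_mem hv hw
      | smul c v _ hv => rw [mul_smul_comm]; exact Submodule.smul_mem _ c hv
    | mul a b ha hb => exact fun s hs => by rw [mul_assoc]; exact ha _ (hb _ hs)
    | add a b ha hb => exact fun s hs => by rw [add_mul]; exact add_mem (ha _ hs) (hb _ hs)
  have hSr : ∀ a, ∀ s ∈ S, s * a ∈ S := by
    intro a
    induction a using FreeAlgebra.induction with
    | grade0 r =>
      exact fun s hs => by rw [← Algebra.commutes, ← Algebra.smul_def]; exact S.smul_mem r hs
    | grade1 x =>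
      intro s hs
      induction hs using Submodule.span_induction with
      | mem s hs =>
        obtain ⟨u, hu, rfl⟩ := hs
        refine Submodule.subset_span ⟨u * FreeMonoid.of x, ?_, by simp [ψ]⟩
        exact fun h => by simpa [FreeMonoid.length_mul] using congrArg FreeMonoid.length h
      | zero => simp
      | add v w _ _ hv hw => rw [add_mul]; exact add_mem hv hw
      | smul c v _ hv => rw [smul_mul_assoc]; exact Submodule.smul_mem _ c hv
    | mul a b ha hb => exact fun s hs => by rw [← mul_assoc]; exact hb _ (ha _ hs)
    | add a b ha hb => exact fun s hs => by rw [mul_add]; exact add_mem (ha _ hs) (hb _ hs)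
  have hJl : ∀ a, ∀ s ∈ J, a * s ∈ J := by
    intro a
    induction a using FreeAlgebra.induction with
    | grade0 r => exact fun s hs => by rw [← Algebra.smul_def]; exact J.smul_mem r hs
    | grade1 x =>
      intro s hs ℓ
      have : Lt (FreeAlgebra.ι F x * s) = Polynomial.monomial 1 (Λ (FreeMonoid.of x)) * Lt s := by
        simp [Lt, lengthMonomial]
      rw [this, ← Polynomial.C_mul_X_eq_monomial, mul_assoc, Polynomial.coeff_C_mul]
      cases ℓ with
      | zero => simp
      | succ ℓ =>
        rw [Polynomial.coeff_X_mul, add_comm ℓ]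
        exact mul_mem_wordSpan (FreeMonoid.of x) (hs ℓ)
    | mul a b ha hb => exact fun s hs => by rw [mul_assoc]; exact ha _ (hb _ hs)
    | add a b ha hb => exact fun s hs => by rw [add_mul]; exact add_mem (ha _ hs) (hb _ hs)
  have hJr : ∀ a, ∀ s ∈ J, s * a ∈ J := by
    intro a
    induction a using FreeAlgebra.induction with
    | grade0 r =>
      exact fun s hs => by rw [← Algebra.commutes, ← Algebra.smul_def]; exact J.smul_mem r hs
    | grade1 x =>
      intro s hs ℓ
      have : Lt (s * FreeAlgebra.ι F x) = Lt s * Polynomial.monomial 1 (Λ (FreeMonoid.of x)) := by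
        simp [Lt, lengthMonomial]
      rw [this, ← Polynomial.C_mul_X_eq_monomial, ← mul_assoc]
      cases ℓ with
      | zero => simp
      | succ ℓ =>
        rw [Polynomial.coeff_mul_X, Polynomial.coeff_mul_C]
        exact wordSpan_mul_mem (FreeMonoid.of x) (hs ℓ)
    | mul a b ha hb => exact fun s hs => by rw [← mul_assoc]; exact hb _ (ha _ hs)
    | add a b ha hb => exact fun s hs => by rw [mul_add]; exact add_mem (ha _ hs) (hb _ hs)
  have hpow : ∀ x ∈ S, x ^ n ∈ J := by
    intro x hx
    have h1 : exchangeLead n (List.replicate n x) 1 ∈ J := by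
      refine (isSlotLinear_exchangeLead (F := F) n 1).mem_of_forall_mem_span
        (T := ψ '' {u | u ≠ 1}) (n := n) (fun T hT hTS => ?_) _ (by simp)
        (fun s hs => by rwa [List.eq_of_mem_replicate hs])
      choose! g hg using hTS
      have hTg : T = (T.map g).map ψ := by
        rw [List.map_map]
        exact (List.map_id T).symm.trans (List.map_congr_left fun s hs => (hg s hs).2.symm)
      rw [hTg, ← map_one ψ]
      intro ℓ
      have h2 := map_exchangeLead (Lt : FreeAlgebra F X →+* Polynomial E) n ((T.map g).map ψ) (ψ 1)
      simp only [RingHom.coe_coe] at h2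
      rw [h2, List.map_map, hLψ, funext (f := Lt ∘ ψ) hLψ, exchangeLead_lengthMonomial,
        Polynomial.coeff_monomial]
      split_ifs with hℓ
      · rw [← hℓ, map_one]
        refine h _ (by simpa using hT) ?_
        simp only [List.mem_map]
        rintro _ ⟨s, hs, rfl⟩
        exact (hg s hs).1
      · exact zero_mem _
    have h2 := exchangeLead_map_commMonoid (powersHom _ x)
      (List.replicate n (Multiplicative.ofAdd (1 : ℕ))) 1 n (by simp)
    rw [List.map_replicate, map_one (powersHom _ x)] at h2
    simp only [powersHom_apply, toAdd_ofAdd, pow_one, List.prod_replicate, mul_one, toAdd_pow,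
      smul_eq_mul] at h2
    rw [h2, ← Int.cast_smul_eq_zsmul F] at h1
    refine (J.smul_mem_iff (s := ((((-1) ^ n * (n.factorial : ℤ) : ℤ)) : F)) ?_).mp h1
    exact Int.cast_ne_zero.mpr (mul_ne_zero (by simp) (by exact_mod_cast n.factorial_ne_zero))
  obtain ⟨N, hN⟩ := exists_prod_mem_of_pow_mem hSl hSr n J hJl hJr hpow
  refine ⟨N, fun u hu => ?_⟩
  have h1 := hN (u.toList.map (FreeAlgebra.ι F)) ((List.length_map _).symm ▸ hu) ?_ u.length
  · rw [← FreeMonoid.lift_apply] at h1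
    change (Lt (ψ u)).coeff _ ∈ _ at h1
    rw [hLψ] at h1
    simpa [lengthMonomial] using h1
  · simp only [List.mem_map]
    rintro _ ⟨x, -, rfl⟩
    exact Submodule.subset_span ⟨FreeMonoid.of x, FreeMonoid.of_ne_one x, by simp [ψ]⟩

end WordSpan

section ExchangeBound

/-- An algebra acting on a finitely generated module over a commutative algebra satisfies
matrix identities. -/
lemma IsMatrixIdentity.apply_eq_zero {F A K E Y : Type} [Field F] [Infinite F] [Ring A]
    [Algebra F A] [CommRing K] [Algebra F K] [Ring E] [Algebra K E] [Algebra F E]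
    [IsScalarTower F K E] {s : ℕ} {f : FreeAlgebra F Y} (hf : IsMatrixIdentity (Fin s) F f)
    {L : A →ₐ[F] E} {v : Fin s → E} (hone : 1 ∈ Submodule.span K (Set.range v))
    (hv : ∀ a i, L a * v i ∈ Submodule.span K (Set.range v)) (φ : FreeAlgebra F Y →ₐ[F] A) :
    L (φ f) = 0 := by
  simp only [Submodule.mem_span_range_iff_exists_fun] at hv
  choose m hm using hv
  let ψ : FreeAlgebra F Y →ₐ[F] Matrix (Fin s) (Fin s) K :=
    FreeAlgebra.lift F fun y => Matrix.of fun i j => m (φ (FreeAlgebra.ι F y)) j i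
  have hψ : ∀ g j, L (φ g) * v j = ∑ i, ψ g i j • v i := by
    intro g
    induction g using FreeAlgebra.induction with
    | grade0 r =>
      intro j
      simp [Matrix.algebraMap_eq_diagonal, Matrix.diagonal_apply, ite_smul,
        ← Algebra.smul_def]
    | grade1 y => exact fun j => by simp [ψ, hm]
    | mul a b ha hb =>
      intro j
      simp only [map_mul, mul_assoc, hb, Finset.mul_sum, mul_smul_comm, ha, Matrix.mul_apply,
        Finset.smul_sum, Finset.sum_smul, smul_smul]
      rw [Finset.sum_comm]
      exact Finset.sum_congr rfl fun i _ => Finset.sum_congr rfl fun k _ => by rw [mul_comm]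
    | add a b ha hb =>
      intro j
      simp only [map_add, add_mul, ha, hb, Matrix.add_apply, add_smul, Finset.sum_add_distrib]
  have h0 : ∀ x ∈ Submodule.span K (Set.range v), L (φ f) * x = 0 := by
    intro x hx
    induction hx using Submodule.span_induction with
    | mem x hx =>
      obtain ⟨j, rfl⟩ := hx
      rw [hψ, hf.extend ψ]
      simp
    | zero => simp
    | add x y _ _ hx hy => rw [mul_add, hx, hy, add_zero]
    | smul c x _ hx => rw [mul_smul_comm, hx, smul_zero]
  simpa using h0 1 hone

lemma exists_sum_map_eq {K M M' ι : Type*} [CommRing K] [AddCommGroup M] [Module K M]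
    [AddCommGroup M'] {j : M →+ M'} {V : Submodule K (Module.End K M)} {q : ι → M → M'}
    {x : ι → Module.End K M} (l : List ι)
    (h : ∀ i ∈ l, ∃ c ∈ V, ∀ f, q i f = j ((x i + c) f)) :
    ∃ c ∈ V, ∀ f, (l.map fun i => q i f).sum = j (((l.map x).sum + c) f) := by
  induction l with
  | nil => exact ⟨0, V.zero_mem, by simp⟩
  | cons i l ih =>
    simp only [List.forall_mem_cons] at h
    obtain ⟨c, hc, hq⟩ := h.1
    obtain ⟨d, hd, hl⟩ := ih h.2
    refine ⟨c + d, V.add_mem hc hd, fun f => ?_⟩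
    rw [List.map_cons, List.sum_cons, hq, hl, ← map_add, ← LinearMap.add_apply, List.map_cons,
      List.sum_cons, add_add_add_comm]

variable {F A K M M' X : Type} [Field F] [Ring A] [Algebra F A] [CommRing K] [Algebra F K]
  [AddCommGroup M] [Module F M] [Module K M] [IsScalarTower F K M] [AddCommGroup M']
  {L : A →ₐ[F] Module.End K M} {τ : A → K} {j : M →+ M'} {Q : List A → A → M → M'}

lemma exists_exchange_eq (h0 : ∀ z f, Q [] z f = j (L z f))
    (h1 : ∀ w S z f, Q (w :: S) z f = Q S z (τ w • f) -
      ((leftMultiples w S).map fun S' => Q S' z f).sum - Q S (w * z) f)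
    {Λ : FreeMonoid X →* Module.End K M} {e : FreeMonoid X →* A} (hΛ : ∀ u, Λ u = L (e u))
    (k : ℕ) (S : List (FreeMonoid X)) (z : FreeMonoid X) (hk : S.length = k)
    (hS : ∀ u ∈ S, u ≠ 1) :
    ∃ c ∈ wordSpan K Λ ((S.map FreeMonoid.length).sum + z.length),
      ∀ f, Q (S.map e) (e z) f = j ((exchangeLead k (S.map Λ) (Λ z) + c) f) := by
  induction k generalizing S z with
  | zero =>
    obtain rfl := List.length_eq_zero_iff.mp hk
    exact ⟨0, zero_mem _, fun f => by simp [exchangeLead, h0, hΛ]⟩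
  | succ k ih =>
    obtain ⟨w, S, rfl⟩ := List.exists_cons_of_length_eq_add_one hk
    have hk : S.length = k := by simpa using hk
    simp only [List.forall_mem_cons] at hS
    have hw : 0 < w.length := Nat.pos_of_ne_zero fun h => hS.1 (FreeMonoid.length_eq_zero.mp h)
    obtain ⟨c₁, hc₁, h₁⟩ := ih S z hk hS.2
    obtain ⟨c₂, hc₂, h₂⟩ := ih S (w * z) hk hS.2
    obtain ⟨c₃, hc₃, h₃⟩ := exists_sum_map_eq (j := j) (leftMultiples w S)
      (V := wordSpan K Λ (((w :: S).map FreeMonoid.length).sum + z.length))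
      (q := fun T f => Q (T.map e) (e z) f) (x := fun T => exchangeLead k (T.map Λ) (Λ z))
      fun T hT => by
        have h := ih T z ((length_of_mem_leftMultiples hT).trans hk)
          (forall_mem_of_mem_leftMultiples (p := (· ≠ 1)) (fun s hs h => hs ?_) hS.2 hT)
        · rwa [sum_map_of_mem_leftMultiples FreeMonoid.length_mul hT] at h
        · rw [← FreeMonoid.length_eq_zero] at h ⊢
          rw [FreeMonoid.length_mul] at h
          omega
    refine ⟨τ (e w) • (exchangeLead k (S.map Λ) (Λ z) + c₁) - c₃ - c₂, ?_, fun f => ?_⟩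
    · refine sub_mem (sub_mem (Submodule.smul_mem _ _ (wordSpan_mono ?_ (add_mem
        (exchangeLead_mem_wordSpan Λ k S z) (wordSpan_mono (Nat.le_succ _) hc₁)))) hc₃) ?_
      · simp only [List.map_cons (f := FreeMonoid.length), List.sum_cons]
        omega
      · convert hc₂ using 2
        simp only [List.map_cons (f := FreeMonoid.length), List.sum_cons, FreeMonoid.length_mul]
        ring
    · rw [List.map_cons (f := e), h1, h₁, leftMultiples_map (map_mul e), List.map_map,
        Function.comp_def, h₃, ← map_mul e, h₂, ← map_sub, ← map_sub, List.map_cons (f := Λ),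
        exchangeLead, leftMultiples_map (map_mul Λ), List.map_map, ← map_mul Λ, map_smul]
      congr 1
      simp only [Function.comp_def, LinearMap.add_apply, LinearMap.sub_apply, LinearMap.neg_apply,
        LinearMap.smul_apply]
      abel

/-- An action of a finitely generated algebra, with an exchange recursion of bounded depth,
satisfies matrix identities. -/
lemma exists_isMatrixIdentity_apply_eq_zero [CharZero F] [Finite X] {a : X → A}
    (ha : Algebra.adjoin F (Set.range a) = ⊤) (hj : Function.Injective j)
    (h0 : ∀ z f, Q [] z f = j (L z f))
    (h1 : ∀ w S z f, Q (w :: S) z f = Q S z (τ w • f) -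
      ((leftMultiples w S).map fun S' => Q S' z f).sum - Q S (w * z) f)
    {n : ℕ} (h2 : ∀ S z f, n ≤ S.length → Q S z f = 0) :
    ∃ s, ∀ (Y : Type) (f : FreeAlgebra F Y), IsMatrixIdentity (Fin s) F f →
      ∀ φ : FreeAlgebra F Y →ₐ[F] A, L (φ f) = 0 := by
  let e : FreeMonoid X →* A := FreeMonoid.lift a
  let Λ : FreeMonoid X →* Module.End K M := (L : A →* Module.End K M).comp e
  obtain ⟨N, hN⟩ := exists_mem_wordSpan_length (F := F) (K := K) (Λ := Λ)
      (n := n) fun S hS hS1 => by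
    obtain ⟨c, hc, h⟩ := exists_exchange_eq h0 h1 (Λ := Λ) (e := e) (fun _ => rfl) n S 1 hS hS1
    have h3 : exchangeLead n (S.map Λ) (Λ 1) + c = 0 := by
      ext f
      refine hj ?_
      rw [← h, h2 _ _ _ (by simp [hS])]
      simp
    rw [map_one] at h3
    rw [eq_neg_of_add_eq_zero_left h3]
    exact neg_mem (by simpa using hc)
  obtain ⟨s, v, -, hv⟩ := ((List.finite_length_lt X (N + 1)).image Λ).fin_param
  have hV : Submodule.span K (Set.range v) = wordSpan K Λ (N + 1) := by
    rw [hv]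
    rfl
  have hgen : ∀ x, ∀ y ∈ wordSpan K Λ (N + 1), L (a x) * y ∈ wordSpan K Λ (N + 1) := by
    intro x y hy
    have hx : L (a x) = Λ (FreeMonoid.of x) := by simp [Λ, e]
    induction hy using Submodule.span_induction with
    | mem y hy =>
      obtain ⟨u, hu, rfl⟩ := hy
      rw [hx, ← map_mul]
      have hl : (FreeMonoid.of x * u).length = u.length + 1 := by
        rw [FreeMonoid.length_mul, FreeMonoid.length_of, add_comm]
      obtain h | h := Nat.lt_or_eq_of_le (Nat.lt_succ_iff.mp hu)
      · exact mem_wordSpan (by omega)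
      · have := hN (FreeMonoid.of x * u) (by omega)
        rwa [hl, h] at this
    | zero => simp
    | add y z _ _ hy hz => rw [mul_add]; exact add_mem hy hz
    | smul c y _ hy => rw [mul_smul_comm]; exact Submodule.smul_mem _ c hy
  have hall : ∀ b, ∀ y ∈ wordSpan K Λ (N + 1), L b * y ∈ wordSpan K Λ (N + 1) := by
    intro b
    have hb : b ∈ Algebra.adjoin F (Set.range a) := ha ▸ Algebra.mem_top
    induction hb using Algebra.adjoin_induction with
    | mem b hb =>
      obtain ⟨x, rfl⟩ := hb
      exact hgen x
    | algebraMap r =>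
      intro y hy
      rw [AlgHom.commutes, ← Algebra.smul_def]
      exact Submodule.smul_of_tower_mem _ r hy
    | add b c _ _ hb hc =>
      exact fun y hy => by rw [map_add, add_mul]; exact add_mem (hb y hy) (hc y hy)
    | mul b c _ _ hb hc => exact fun y hy => by rw [map_mul, mul_assoc]; exact hb _ (hc y hy)
  refine ⟨s, fun Y f hf φ => hf.apply_eq_zero (K := K) (v := v) ?_ (fun b i => ?_) φ⟩
  · rw [hV, ← map_one Λ]
    exact mem_wordSpan (by simp)
  · rw [hV]
    exact hall b _ (hV ▸ Submodule.subset_span ⟨i, rfl⟩)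

end ExchangeBound

section CommutingTraces

variable {F A M M' X : Type} [Field F] [Ring A] [Algebra F A] [AddCommGroup M] [Module F M]
  [AddCommGroup M'] {L : A →ₐ[F] Module.End F M} {T : A → Module.End F M} {j : M →+ M'}
  {Q : List A → A → M → M'}

open scoped IsMulCommutative in
lemma exists_isMatrixIdentity_apply_eq_zero_of_commute [CharZero F] [Finite X] {a : X → A}
    (ha : Algebra.adjoin F (Set.range a) = ⊤) (hT : ∀ a b, Commute (T a) (T b))
    (hLT : ∀ a b, Commute (L a) (T b)) (hj : Function.Injective j)
    (h0 : ∀ z f, Q [] z f = j (L z f))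
    (h1 : ∀ w S z f, Q (w :: S) z f = Q S z (T w f) -
      ((leftMultiples w S).map fun S' => Q S' z f).sum - Q S (w * z) f)
    {n : ℕ} (h2 : ∀ S z f, n ≤ S.length → Q S z f = 0) :
    ∃ s, ∀ (Y : Type) (f : FreeAlgebra F Y), IsMatrixIdentity (Fin s) F f →
      ∀ φ : FreeAlgebra F Y →ₐ[F] A, L (φ f) = 0 := by
  have hcomm : IsMulCommutative (Algebra.adjoin F (Set.range T)) :=
    Algebra.isMulCommutative_adjoin F (by rintro _ ⟨b, rfl⟩ _ ⟨c, rfl⟩; exact hT b c)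
  have hL : ∀ b, ∀ k ∈ Algebra.adjoin F (Set.range T), Commute (L b) k := by
    intro b k hk
    induction hk using Algebra.adjoin_induction with
    | mem k hk =>
      obtain ⟨c, rfl⟩ := hk
      exact hLT b c
    | algebraMap r => exact (Algebra.commutes r (L b)).symm
    | add k l _ _ hk hl => exact hk.add_right hl
    | mul k l _ _ hk hl => exact hk.mul_right hl
  let L' : A →ₐ[F] Module.End (Algebra.adjoin F (Set.range T)) M :=
    { toFun := fun b =>
        { toFun := L b
          map_add' := map_add (L b)
          map_smul' := fun k f => LinearMap.congr_fun (hL b k.1 k.2) f }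
      map_one' := by ext f; exact LinearMap.congr_fun (map_one L) f
      map_mul' := fun b c => by ext f; exact LinearMap.congr_fun (map_mul L b c) f
      map_zero' := by ext f; exact LinearMap.congr_fun (map_zero L) f
      map_add' := fun b c => by ext f; exact LinearMap.congr_fun (map_add L b c) f
      commutes' := fun r => by ext f; exact LinearMap.congr_fun (L.commutes r) f }
  let τ (w : A) : Algebra.adjoin F (Set.range T) := ⟨T w, Algebra.subset_adjoin ⟨w, rfl⟩⟩
  obtain ⟨s, hs⟩ := exists_isMatrixIdentity_apply_eq_zero (L := L') (τ := τ) ha hj h0 h1 h2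
  refine ⟨s, fun Y f hf φ => ?_⟩
  ext g
  exact LinearMap.congr_fun (hs Y f hf φ) g

end CommutingTraces

section DoublyAlternatingIdentities

variable {F A ι X : Type} [Field F] [CharZero F] [Ring A] [Algebra F A] [Fintype ι]
  [DecidableEq ι]

/-- Elements of a finitely generated algebra with a Capelli identity that come from matrix
identities annihilate the doubly alternating functions. -/
lemma SatisfiesCapelli.exists_mul_eq_zero [Finite X] {a : X → A}
    (ha : Algebra.adjoin F (Set.range a) = ⊤) (hA : SatisfiesCapelli F A (Option ι)) :
    ∃ s, ∀ (Y : Type) (f : FreeAlgebra F Y), IsMatrixIdentity (Fin s) F f →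
      ∀ φ : FreeAlgebra F Y →ₐ[F] A, ∀ h ∈ doublyAlternating F A ι, ∀ x, φ f * h x = 0 := by
  let L₀ : A →ₐ[F] Module.End F ((ι ⊕ ι → A) → A) :=
    { toFun := fun b => LinearMap.compLeft (LinearMap.mulLeft F b) _
      map_one' := by ext f x; exact one_mul _
      map_mul' := fun b c => by ext f x; exact mul_assoc _ _ _
      map_zero' := by ext f x; exact zero_mul _
      map_add' := fun b c => by ext f x; exact add_mul _ _ _
      commutes' := fun r => by ext f x; exact (Algebra.smul_def r _).symm }
  let L : A →ₐ[F] Module.End F (doublyAlternating F A ι) :=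
    { toFun := fun b => (L₀ b).restrict fun f hf => mul_mem_doublyAlternating b hf
      map_one' := by ext f : 2; exact LinearMap.congr_fun (map_one L₀) f.1
      map_mul' := fun b c => by ext f : 2; exact LinearMap.congr_fun (map_mul L₀ b c) f.1
      map_zero' := by ext f : 2; exact LinearMap.congr_fun (map_zero L₀) f.1
      map_add' := fun b c => by ext f : 2; exact LinearMap.congr_fun (map_add L₀ b c) f.1
      commutes' := fun r => by ext f : 2; exact LinearMap.congr_fun (L₀.commutes r) f.1 }
  let T₀ (b : A) : Module.End F ((ι ⊕ ι → A) → A) :=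
    { toFun := traceAt Function.Embedding.inl b
      map_add' := fun f g => by funext x; exact Finset.sum_add_distrib
      map_smul' := fun c f => by funext x; simp [traceAt, Finset.smul_sum] }
  let T (b : A) : Module.End F (doublyAlternating F A ι) :=
    (T₀ b).restrict fun f hf => traceAt_mem_doublyAlternating b hf
  obtain ⟨s, hs⟩ := exists_isMatrixIdentity_apply_eq_zero_of_commute (L := L) (T := T)
    (j := (doublyAlternating F A ι).subtype.toAddMonoidHom)
    (Q := fun S z f => exchangeSum Function.Embedding.inl S z f.1) (n := Fintype.card ι) ha
    (fun b c => by ext f : 2; exact traceAt_comm hA f.2 b c)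
    (fun b c => by
      ext f : 2
      funext x
      exact Finset.mul_sum _ _ _)
    Subtype.val_injective
    (fun z f => by funext x; exact exchangeSum_nil hA f.2 z x)
    (fun w S z f => exchangeSum_cons w S z)
    (fun S z f h => exchangeSum_eq_zero h z)
  refine ⟨s, fun Y f hf φ h hh x => ?_⟩
  exact congrFun (congrArg Subtype.val (LinearMap.congr_fun (hs Y f hf φ) ⟨h, hh⟩)) x

end DoublyAlternatingIdentities

section Rename

variable {A ι κ : Type*}

lemma wordVars_rename (s : ι → κ) (l : List (ι ⊕ A)) :
    wordVars (wordSubst (fun i => [(Sum.inl (s i) : κ ⊕ A)]) l) = (wordVars l).map s := by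
  rw [wordVars_subst, List.map_eq_flatMap]
  rfl

lemma wordEval_rename [Ring A] (s : ι → κ) (l : List (ι ⊕ A)) (x : κ → A) :
    wordEval (wordSubst (fun i => [(Sum.inl (s i) : κ ⊕ A)]) l) x = wordEval l (x ∘ s) := by
  rw [wordEval_subst]
  simp [Function.comp_def]

end Rename

section CapelliIdeal

variable {F A ι κ : Type*} [Field F] [Ring A] [Algebra F A] [Fintype ι] [DecidableEq ι]

lemma alternatization_wordMultilinear_apply {l : List (ι ⊕ A)} (hl : IsMultilinearWord l)
    (x : ι → A) : MultilinearMap.alternatization (wordMultilinear F l hl) x =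
      ∑ σ : Equiv.Perm ι, σ.sign • wordEval l (x ∘ σ) := by
  rw [MultilinearMap.alternatization_apply]
  rfl

lemma SatisfiesCapelli.of_equiv [Fintype κ] [DecidableEq κ] (hA : SatisfiesCapelli F A ι)
    (e : ι ≃ κ) : SatisfiesCapelli F A κ := by
  rw [satisfiesCapelli_iff] at hA ⊢
  intro l hl x
  rw [← hA (wordSubst (fun i => [Sum.inl (e.symm i)]) l) ?_ (x ∘ e), ← Equiv.sum_comp e.permCongr]
  · refine Finset.sum_congr rfl fun σ _ => ?_
    rw [Equiv.Perm.sign_permCongr, wordEval_rename]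
    congr 2
  · rw [IsMultilinearWord, wordVars_rename]
    refine ⟨hl.1.map e.symm.injective, fun i => List.mem_map.mpr ⟨e i, hl.2 _, by simp⟩⟩

variable (F A ι) in
/-- The values of the Capelli polynomials. -/
def capelliValues : Set A :=
  {u | ∃ (l : List (ι ⊕ A)) (hl : IsMultilinearWord l) (x : ι → A),
    MultilinearMap.alternatization (wordMultilinear F l hl) x = u}

lemma mul_mem_capelliValues (b : A) {u : A} (hu : u ∈ capelliValues F A ι) :
    b * u ∈ capelliValues F A ι := by
  obtain ⟨l, hl, x, rfl⟩ := hu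
  have hl' : IsMultilinearWord (Sum.inr b :: l) := hl
  refine ⟨Sum.inr b :: l, hl', x, ?_⟩
  simp only [alternatization_wordMultilinear_apply, Finset.mul_sum, mul_smul_comm,
    wordEval_cons_inr]

lemma capelliValues_mul_mem (b : A) {u : A} (hu : u ∈ capelliValues F A ι) :
    u * b ∈ capelliValues F A ι := by
  obtain ⟨l, hl, x, rfl⟩ := hu
  refine ⟨l ++ [Sum.inr b], by simpa [IsMultilinearWord] using hl, x, ?_⟩
  simp only [alternatization_wordMultilinear_apply, Finset.sum_mul, smul_mul_assoc,
    wordEval_append, wordEval_cons_inr, wordEval_nil, mul_one]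

variable (F A ι) in
/-- The ideal spanned by the values of the Capelli polynomials. -/
def capelliIdeal : Ideal A where
  __ := (Submodule.span F (capelliValues F A ι)).toAddSubmonoid
  smul_mem' b u hu := by
    change b * u ∈ Submodule.span F (capelliValues F A ι)
    induction hu using Submodule.span_induction with
    | mem u hu => exact Submodule.subset_span (mul_mem_capelliValues b hu)
    | zero => simp
    | add v w _ _ hv hw => rw [mul_add]; exact add_mem hv hw
    | smul c v _ hv => rw [mul_smul_comm]; exact Submodule.smul_mem _ c hv

lemma mem_capelliIdeal {u : A} :
    u ∈ capelliIdeal F A ι ↔ u ∈ Submodule.span F (capelliValues F A ι) := Iff.rfl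

instance : (capelliIdeal F A ι).IsTwoSided where
  mul_mem_of_left {u} b hu := by
    rw [mem_capelliIdeal] at hu ⊢
    induction hu using Submodule.span_induction with
    | mem u hu => exact Submodule.subset_span (capelliValues_mul_mem b hu)
    | zero => simp
    | add v w _ _ hv hw => rw [add_mul]; exact add_mem hv hw
    | smul c v _ hv => rw [smul_mul_assoc]; exact Submodule.smul_mem _ c hv

lemma satisfiesCapelli_quotient : SatisfiesCapelli F (A ⧸ capelliIdeal F A ι) ι := by
  rw [satisfiesCapelli_iff]
  intro l hl x
  obtain ⟨x, rfl⟩ := (Ideal.Quotient.mk_surjective (I := capelliIdeal F A ι)).comp_left x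
  let q := Ideal.Quotient.mk (capelliIdeal F A ι)
  obtain ⟨l, rfl⟩ : ∃ l' : List (ι ⊕ A), l'.map (Sum.map id q) = l :=
    List.map_surjective_iff.mpr (Function.surjective_id.sumMap Ideal.Quotient.mk_surjective) l
  have hl' : IsMultilinearWord l := by
    have : wordVars (l.map (Sum.map id q)) = wordVars l := by
      rw [wordVars, wordVars, List.filterMap_map]
      congr 1
      funext c
      rcases c with i | c <;> rfl
    rwa [IsMultilinearWord, this] at hl
  have heval : ∀ x : ι → A, wordEval (l.map (Sum.map id q)) (q ∘ x) = q (wordEval l x) := by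
    intro x
    rw [wordEval, wordEval, map_list_prod, List.map_map, List.map_map]
    congr 2
    funext c
    rcases c with i | c <;> rfl
  have hu : MultilinearMap.alternatization (wordMultilinear F l hl') x ∈ capelliIdeal F A ι :=
    mem_capelliIdeal.mpr (Submodule.subset_span ⟨l, hl', x, rfl⟩)
  rw [← Ideal.Quotient.eq_zero_iff_mem, alternatization_wordMultilinear_apply, map_sum] at hu
  rw [← hu]
  refine Finset.sum_congr rfl fun σ _ => ?_
  rw [Function.comp_assoc, heval, Units.smul_def, Units.smul_def, map_zsmul]

lemma alternatization_mul_mem_doublyAlternating {l l' : List (ι ⊕ A)} (hl : IsMultilinearWord l)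
    (hl' : IsMultilinearWord l') :
    (fun x : ι ⊕ ι → A => MultilinearMap.alternatization (wordMultilinear F l hl) (x ∘ Sum.inl) *
      MultilinearMap.alternatization (wordMultilinear F l' hl') (x ∘ Sum.inr)) ∈
      doublyAlternating F A ι := by
  refine ⟨?_, fun τ x => ⟨?_, ?_⟩⟩
  · have h : (fun x : ι ⊕ ι → A =>
        MultilinearMap.alternatization (wordMultilinear F l hl) (x ∘ Sum.inl) *
        MultilinearMap.alternatization (wordMultilinear F l' hl') (x ∘ Sum.inr)) =
        ∑ σ : Equiv.Perm ι, ∑ τ : Equiv.Perm ι, ((σ.sign * τ.sign : ℤˣ) : ℤ) •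
          wordEval (wordSubst (fun i => [Sum.inl (Sum.inl (σ i))]) l ++
            wordSubst (fun i => [Sum.inl (Sum.inr (τ i))]) l') := by
      funext x
      simp only [alternatization_wordMultilinear_apply, Finset.sum_mul_sum, Finset.sum_apply,
        Pi.smul_apply, wordEval_append]
      refine Finset.sum_congr rfl fun σ _ => Finset.sum_congr rfl fun τ _ => ?_
      rw [wordEval_rename (fun i => Sum.inl (σ i)), wordEval_rename (fun i => Sum.inr (τ i)),
        smul_mul_smul_comm, Units.smul_def]
      rfl
    rw [h]
    refine Submodule.sum_mem _ fun σ _ => Submodule.sum_mem _ fun τ _ => ?_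
    have hw : ∀ w : List ((ι ⊕ ι) ⊕ A), IsMultilinearWord w →
        wordEval w ∈ multilinearFunctions F A (ι ⊕ ι) :=
      fun w hw => Submodule.subset_span ⟨w, hw, rfl⟩
    refine zsmul_mem (hw _ ?_) _
    rw [IsMultilinearWord, wordVars_append, wordVars_rename (fun i => Sum.inl (σ i)),
      wordVars_rename (fun i => Sum.inr (τ i))]
    refine ⟨List.Nodup.append (hl.1.map (Sum.inl_injective.comp σ.injective))
      (hl'.1.map (Sum.inr_injective.comp τ.injective)) ?_, ?_⟩
    · intro p hp hp'
      obtain ⟨i, -, rfl⟩ := List.mem_map.mp hp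
      obtain ⟨j, -, h⟩ := List.mem_map.mp hp'
      exact Sum.inr_ne_inl h
    · rintro (i | i)
      · exact List.mem_append_left _ (List.mem_map.mpr ⟨σ.symm i, hl.2 _, by simp⟩)
      · exact List.mem_append_right _ (List.mem_map.mpr ⟨τ.symm i, hl'.2 _, by simp⟩)
  · have h1 : (x ∘ Equiv.sumCongr τ (Equiv.refl ι)) ∘ Sum.inl = (x ∘ Sum.inl) ∘ τ := rfl
    have h2 : (x ∘ Equiv.sumCongr τ (Equiv.refl ι)) ∘ Sum.inr = x ∘ Sum.inr := rfl
    simp only [h1, h2, AlternatingMap.map_perm, smul_mul_assoc]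
  · have h1 : (x ∘ Equiv.sumCongr (Equiv.refl ι) τ) ∘ Sum.inl = x ∘ Sum.inl := rfl
    have h2 : (x ∘ Equiv.sumCongr (Equiv.refl ι) τ) ∘ Sum.inr = (x ∘ Sum.inr) ∘ τ := rfl
    simp only [h1, h2, AlternatingMap.map_perm, mul_smul_comm]

lemma mul_mul_eq_zero_of_mem_capelliIdeal {b u v : A}
    (hb : ∀ h ∈ doublyAlternating F A ι, ∀ x, b * h x = 0) (hu : u ∈ capelliIdeal F A ι)
    (hv : v ∈ capelliIdeal F A ι) : b * (u * v) = 0 := by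
  rw [mem_capelliIdeal] at hu hv
  induction hu using Submodule.span_induction with
  | mem u hu =>
    induction hv using Submodule.span_induction with
    | mem v hv =>
      obtain ⟨l, hl, x, rfl⟩ := hu
      obtain ⟨l', hl', y, rfl⟩ := hv
      exact hb _ (alternatization_mul_mem_doublyAlternating hl hl') (Sum.elim x y)
    | zero => simp
    | add v w _ _ hv hw => rw [mul_add, mul_add, hv, hw, add_zero]
    | smul c v _ hv => rw [mul_smul_comm, mul_smul_comm, hv, smul_zero]
  | zero => simp
  | add u w _ _ hu hw => rw [add_mul, mul_add, hu, hw, add_zero]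
  | smul c u _ hu => rw [smul_mul_assoc, mul_smul_comm, hu, smul_zero]

end CapelliIdeal

section FiniteGeneration

variable {F X : Type} [Field F] [CharZero F] [Finite X]

/-- A finitely generated algebra with Capelli identities satisfies matrix identities. -/
theorem SatisfiesCapelli.exists_satisfiesMatrixIdentities (n : ℕ) :
    ∀ (A : Type) [Ring A] [Algebra F A] (a : X → A), Algebra.adjoin F (Set.range a) = ⊤ →
      SatisfiesCapelli F A (Fin n) → ∃ N, SatisfiesMatrixIdentities F A N := by
  induction n with
  | zero =>
    intro A _ _ a _ hA
    have h := satisfiesCapelli_iff.mp hA [] ⟨by simp, fun i => i.elim0⟩ Fin.elim0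
    have h1 : (1 : A) = 0 := by simpa [Finset.univ_unique] using h
    exact ⟨0, fun Y f _ φ => eq_zero_of_zero_eq_one h1.symm _⟩
  | succ n ih =>
    intro A _ _ a ha hA
    obtain ⟨s, hs⟩ := (hA.of_equiv (finSuccEquiv n)).exists_mul_eq_zero ha
    let q := Ideal.Quotient.mkₐ F (capelliIdeal F A (Fin n))
    obtain ⟨N, hN⟩ := ih (A ⧸ capelliIdeal F A (Fin n)) (q ∘ a) (by
      rw [Set.range_comp, ← AlgHom.map_adjoin, ha, Algebra.map_top, AlgHom.range_eq_top]
      exact Ideal.Quotient.mkₐ_surjective F _) satisfiesCapelli_quotient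
    refine ⟨s + (N + N), fun Y f hf φ => ?_⟩
    classical
    have hmem : ∀ g ∈ matrixIdentities F Y (Fin N), φ g ∈ capelliIdeal F A (Fin n) := by
      intro g hg
      exact Ideal.Quotient.eq_zero_iff_mem.mp (hN Y g hg (q.comp φ))
    have hf' : f ∈ matrixIdentities F Y (Fin s) *
        (matrixIdentities F Y (Fin N) * matrixIdentities F Y (Fin N)) := by
      have hle : matrixIdentities F Y (Fin N ⊕ Fin N) ≤
          matrixIdentities F Y (Fin N) * matrixIdentities F Y (Fin N) :=
        fun g hg => IsMatrixIdentity.mem_mul hg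
      have hmul : f ∈ matrixIdentities F Y (Fin s) * matrixIdentities F Y (Fin N ⊕ Fin N) :=
        IsMatrixIdentity.mem_mul
          (hf.reindex (((Equiv.refl _).sumCongr finSumFinEquiv).trans finSumFinEquiv).symm)
      exact mul_le_mul_right hle _ hmul
    suffices h : matrixIdentities F Y (Fin s) *
        (matrixIdentities F Y (Fin N) * matrixIdentities F Y (Fin N)) ≤
        LinearMap.ker φ.toLinearMap from h hf'
    refine Submodule.mul_le.mpr fun g hg k hk => ?_
    change φ (g * k) = 0
    induction hk using Submodule.mul_induction_on' with
    | mem_mul_mem u hu v hv =>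
      rw [map_mul, map_mul]
      exact mul_mul_eq_zero_of_mem_capelliIdeal (hs Y g hg φ) (hmem u hu) (hmem v hv)
    | add x _ y _ hx hy => rw [mul_add, map_add, hx, hy, add_zero]

end FiniteGeneration

/-- The ideal of graded `*`-identities of a finitely generated `G`-graded PI-algebra
with graded involution (over a field of characteristic zero, `G` finite abelian)
contains the ideal of graded `*`-identities of some finite dimensional `G`-graded
algebra with involution. -/
theorem gi_ideal_contains_finite_dimensional
    (F : Type) [Field F] [CharZero F]
    (G : Type) [AddCommGroup G] [Fintype G] [DecidableEq G]
    (A : GrStarAlgebra F G) (hfg : Algebra.FiniteType F A.carrier)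
    (hPI : ∃ (n : ℕ) (f : FreeAlgebra F (Fin n)), f ≠ 0 ∧
      ∀ φ : FreeAlgebra F (Fin n) →ₐ[F] A.carrier, φ f = 0) :
    ∃ C : GrStarAlgebra F G, FiniteDimensional F C.carrier ∧
      giIdeal F G C ⊆ giIdeal F G A := by
  obtain ⟨n, f, hf, hA⟩ := hPI
  obtain ⟨k, β, hβ, hβA⟩ := exists_permutation_identity hf hA
  obtain ⟨d, α, hα1, hα⟩ := exists_sparse_identity hβ hβA
  obtain ⟨S, hS⟩ := hfg.out
  have ha : Algebra.adjoin F (Set.range (Subtype.val : S → A.carrier)) = ⊤ := by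
    rw [← hS]; congr 1; exact Subtype.range_coe
  obtain ⟨m, hm⟩ := exists_satisfiesCapelli hα1 hα ha
  obtain ⟨N, hN⟩ := hm.exists_satisfiesMatrixIdentities m A.carrier _ ha
  exact exists_giIdeal_subset A hN
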